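/- arXiv:2005.07674 — 5 statements merged into one kernel-verified Lean document; each statement's English description precedes it below -/
import Mathlib

section
/- Fix α > 0, and let π_μ, π_φ : (0,∞) → (0,∞) be continuous and k, r₀, r_∞ ∈ ℝ be such that π_μ(μ) ≲ μ^k on (0,∞), π_φ(φ) ≲ φ^{r₀} as φ → 0⁺, and π_φ(φ) ≲ φ^{r_∞} as φ → ∞. If either (k = −1 and n > −r₀) or (k > −1 and n > −r₀ − 1), then ∫_0^∞ ∫_0^∞ π_φ(φ) π_μ(μ) Γ(φ)^{−n} (∏_{i=1}^n x_i^{αφ−1}) μ^{nαφ} exp(−μ^α Σ_{i=1}^n x_i^α) dμ dφ < ∞; i.e., the posterior for (φ,μ) in the Stacy model with α known is proper. -/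
/-!
Write `y i = x i ^ α`, `S = ∑ y i`, `g` for the geometric mean of the `y i`, and
`c = (k + 1) / α ≥ 0`. After replacing `πμ` by its bound `M * μ ^ k`, the `μ`-integral is a
generalized Gamma integral, and the posterior mass is at most a constant times
`∫ πφ(φ) Γ(φ) ^ (-n) (g / S) ^ (n φ) Γ(n φ + c) dφ`.

The integrand is continuous on `(0, ∞)`, so only its behaviour at the two ends matters. At `0`,
`Γ(φ) ^ (-n) = O(φ ^ n)`, while `Γ(n φ + c)` is `O(1 / φ)` if `c = 0` and `O(1)` if `c > 0`; the
two alternatives on `n` say exactly that the resulting power of `φ` exceeds `-1`. At `∞`,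
`Γ(n φ + c) / Γ(φ) ^ n` grows like `n ^ (n φ)` up to subexponential factors, and
`n g / S < 1` by the strict AM-GM inequality, as the data are not all equal, so the integrand decays
exponentially whatever `rinf` is. Crude two-sided Stirling bounds (`Gamma_add_le`, `le_Gamma`)
suffice, because an arbitrarily small exponential loss is affordable.
-/

open MeasureTheory Real Filter Topology

lemma continuousAt_Gamma {s : ℝ} (hs : 0 < s) : ContinuousAt Gamma s :=
  (differentiableAt_Gamma fun m h => by
    have : (0 : ℝ) ≤ m := m.cast_nonneg
    linarith).continuousAt

/-- The elementary bound `sup_t t ^ a * e ^ (-b t) = (a / (b e)) ^ a`, in exponential form. -/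
lemma rpow_mul_exp_neg_le {t a b : ℝ} (ht : 0 < t) (ha : 0 < a) (hb : 0 < b) :
    t ^ a * exp (-(b * t)) ≤ exp (a * (log (a / b) - 1)) := by
  rw [rpow_def_of_pos ht, ← exp_add]
  apply exp_le_exp.2
  have h := log_le_sub_one_of_pos (x := b * t / a) (by positivity)
  rw [log_div (by positivity) ha.ne', log_mul hb.ne' ht.ne'] at h
  rw [log_div ha.ne' hb.ne']
  have h2 := mul_le_mul_of_nonneg_left h ha.le
  have h3 : a * (b * t / a - 1) = b * t - a := by field_simp
  nlinarith

/-- Upper half of Stirling's formula, up to an exponential loss governed by `β < 1`: part of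
the exponential, `e ^ (-β t)`, is spent on bounding `t ^ a`, the rest on integrating `t ^ (d - 1)`. -/
lemma Gamma_add_le {a d β : ℝ} (ha : 0 < a) (hd : 0 < d) (hβ : 0 < β) (hβ1 : β < 1) :
    Gamma (a + d) ≤ exp (a * (log (a / β) - 1)) * ((1 / (1 - β)) ^ d * Gamma d) := by
  have hβ' : 0 < 1 - β := by linarith
  have hI := integral_rpow_mul_exp_neg_mul_Ioi hd hβ'
  have hint : IntegrableOn (fun t : ℝ => t ^ (d - 1) * exp (-((1 - β) * t))) (Set.Ioi 0) := by
    apply Integrable.of_integral_ne_zero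
    rw [hI]
    have := Gamma_pos_of_pos hd
    positivity
  rw [Gamma_eq_integral (by positivity), ← hI, ← integral_const_mul]
  refine setIntegral_mono_on (GammaIntegral_convergent (by positivity)) (hint.const_mul _)
    measurableSet_Ioi fun t (ht : 0 < t) => ?_
  have h1 : exp (-t) * t ^ (a + d - 1)
      = (t ^ a * exp (-(β * t))) * (t ^ (d - 1) * exp (-((1 - β) * t))) := by
    rw [show a + d - 1 = a + (d - 1) by ring, rpow_add ht,
      show -t = -(β * t) + -((1 - β) * t) by ring, exp_add]
    ring
  rw [h1]
  gcongr
  exact rpow_mul_exp_neg_le ht ha hβ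

/-- Lower half of Stirling's formula, up to a polynomial factor: only the part of Euler's
integral over `(φ, φ + 1]` is kept. -/
lemma le_Gamma {φ : ℝ} (hφ : 1 ≤ φ) :
    exp ((φ - 1) * log φ - φ - 1) ≤ Gamma φ := by
  have hφ0 : 0 < φ := by linarith
  have hc := GammaIntegral_convergent hφ0
  have hsub : Set.Ioc φ (φ + 1) ⊆ Set.Ioi 0 := fun t ht => hφ0.trans ht.1
  rw [Gamma_eq_integral hφ0]
  have h1 : ∫ t in Set.Ioc φ (φ + 1), exp (-t) * t ^ (φ - 1)
      ≤ ∫ t in Set.Ioi 0, exp (-t) * t ^ (φ - 1) := by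
    refine setIntegral_mono_set hc ?_ hsub.eventuallyLE
    filter_upwards [ae_restrict_mem measurableSet_Ioi] with t ht
    have : (0 : ℝ) < t := ht
    simp only [Pi.zero_apply]
    positivity
  refine le_trans ?_ h1
  have h2 : ∫ _t in Set.Ioc φ (φ + 1), exp ((φ - 1) * log φ - φ - 1)
      = exp ((φ - 1) * log φ - φ - 1) := by simp
  rw [← h2]
  refine setIntegral_mono_on (by simp) (hc.mono_set hsub) measurableSet_Ioc fun t ht => ?_
  have ht0 : 0 < t := hφ0.trans ht.1
  rw [rpow_def_of_pos ht0, ← exp_add]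
  apply exp_le_exp.2
  have h3 : log φ ≤ log t := log_le_log hφ0 ht.1.le
  have h4 : (φ - 1) * log φ ≤ (φ - 1) * log t := by gcongr
  have := ht.2
  linarith

/-- If `n * v < 1`, the Gamma ratio weighted by `v ^ (n φ)` decays exponentially, because
`Γ(n φ) / Γ(φ) ^ n` grows like `n ^ (n φ)` up to a power of `φ`. -/
lemma ratio_tail {n : ℕ} (hn : 0 < n) {v c : ℝ} (hv : 0 < v) (hnv : n * v < 1) (hc : 0 ≤ c) :
    ∃ K η : ℝ, 0 < η ∧ ∀ φ : ℝ, 2 ≤ φ →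
      (Gamma φ ^ n)⁻¹ * v ^ (n * φ) * Gamma (n * φ + c) ≤ K * (φ ^ (n : ℝ) * exp (-η * φ)) := by
  have hn' : (0 : ℝ) < n := by exact_mod_cast hn
  have hn1 : (1 : ℝ) ≤ n := by exact_mod_cast hn
  obtain ⟨β, hβl, hβ1⟩ := exists_between hnv
  have hβ : 0 < β := lt_trans (by positivity) hβl
  refine ⟨(1 / (1 - β)) ^ (c + 1) * Gamma (c + 1) * exp n, n * (log β - log (n * v)), ?_, ?_⟩
  · have := log_lt_log (by positivity) hβl
    have h2 : 0 < log β - log (n * v) := by linarith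
    positivity
  intro φ hφ
  have hφ0 : 0 < φ := by linarith
  have hmono : Gamma (n * φ + c) ≤ Gamma (n * φ + (c + 1)) := by
    have : 2 ≤ n * φ := by nlinarith
    refine Gamma_strictMonoOn_Ici.monotoneOn ?_ ?_ ?_ <;> try rw [Set.mem_Ici]
    all_goals linarith
  have hup := hmono.trans (Gamma_add_le (a := n * φ) (d := c + 1) (by positivity) (by linarith) hβ hβ1)
  have hlow : (Gamma φ ^ n)⁻¹ ≤ exp (-(n * ((φ - 1) * log φ - φ - 1))) := by
    rw [exp_neg, exp_nat_mul]
    have := le_Gamma (φ := φ) (by linarith)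
    gcongr
  have hG := Gamma_pos_of_pos (s := c + 1) (by linarith)
  have hG2 := Gamma_pos_of_pos (s := n * φ + c) (by positivity)
  have hβ' : 0 < 1 - β := by linarith
  calc (Gamma φ ^ n)⁻¹ * v ^ (n * φ) * Gamma (n * φ + c)
      ≤ exp (-(n * ((φ - 1) * log φ - φ - 1))) * v ^ (n * φ) *
        (exp (n * φ * (log (n * φ / β) - 1)) * ((1 / (1 - β)) ^ (c + 1) * Gamma (c + 1))) := by
        gcongr
    _ = _ := by
        rw [rpow_def_of_pos hv, rpow_def_of_pos hφ0, log_div (by positivity) hβ.ne',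
          log_mul hn'.ne' hφ0.ne', log_mul hn'.ne' hv.ne']
        set A := (1 / (1 - β)) ^ (c + 1) * Gamma (c + 1)
        rw [show ∀ a b d : ℝ, exp a * exp b * (exp d * A) = A * (exp (a + b + d)) by
          intro a b d; rw [exp_add, exp_add]; ring,
          show ∀ a b d : ℝ, A * exp a * (exp b * exp d) = A * (exp (a + b + d)) by
          intro a b d; rw [exp_add, exp_add]; ring]
        congr 2
        ring

/-- Near `0`, `1 / Γ(φ) = φ / Γ(φ + 1) = O(φ)`. -/
lemma inv_Gamma_isBigO (n : ℕ) :
    (fun φ : ℝ => (Gamma φ ^ n)⁻¹) =O[𝓝[>] 0] (fun φ => φ ^ (n : ℝ)) := by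
  have hc : Tendsto (fun φ : ℝ => (Gamma (φ + 1))⁻¹) (𝓝[>] 0) (𝓝 (Gamma (0 + 1))⁻¹) := by
    have h1 : ContinuousAt Gamma ((0 : ℝ) + 1) :=
      (continuousAt_Gamma (by norm_num))
    have h2 : ContinuousAt (fun φ : ℝ => Gamma (φ + 1)) 0 :=
      ContinuousAt.comp (f := fun φ : ℝ => φ + 1) h1 (by fun_prop)
    exact (h2.tendsto.inv₀ (by simp)).mono_left nhdsWithin_le_nhds
  have h := ((Asymptotics.isBigO_refl (fun φ : ℝ => φ) (𝓝[>] 0)).mul (hc.isBigO_one ℝ)).pow n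
  refine h.congr' ?_ ?_
  · filter_upwards [self_mem_nhdsWithin] with φ hφ
    have hφ : (0 : ℝ) < φ := hφ
    rw [Gamma_add_one hφ.ne', ← inv_pow]
    have := Gamma_pos_of_pos hφ
    field_simp
  · filter_upwards with φ
    simp

/-- The Gamma factor coming from the inner integral blows up like `1 / φ` at `0` if `c = 0`,
and is bounded there if `c > 0`. -/
lemma Gamma_isBigO {n : ℕ} (hn : 0 < n) {c e : ℝ} (h : (c = 0 ∧ e = -1) ∨ (0 < c ∧ e = 0)) :
    (fun φ : ℝ => Gamma (n * φ + c)) =O[𝓝[>] 0] (fun φ => φ ^ e) := by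
  have hn' : (0 : ℝ) < n := by exact_mod_cast hn
  have hlim : ∀ d : ℝ, 0 < d →
      (fun φ : ℝ => Gamma (n * φ + d)) =O[𝓝[>] 0] (fun _ => (1 : ℝ)) := by
    intro d hd
    have h1 : ContinuousAt Gamma ((n : ℝ) * 0 + d) :=
      (continuousAt_Gamma (by simpa using hd))
    have h2 : ContinuousAt (fun φ : ℝ => Gamma (n * φ + d)) 0 :=
      ContinuousAt.comp (f := fun φ : ℝ => n * φ + d) h1 (by fun_prop)
    exact (h2.tendsto.mono_left nhdsWithin_le_nhds).isBigO_one ℝ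
  rcases h with ⟨rfl, rfl⟩ | ⟨hc, rfl⟩
  · have h := ((hlim 1 one_pos).mul
      (Asymptotics.isBigO_refl (fun φ : ℝ => φ⁻¹) (𝓝[>] 0))).const_mul_left (n : ℝ)⁻¹
    refine h.congr' ?_ ?_
    · filter_upwards [self_mem_nhdsWithin] with φ hφ
      have hφ : (0 : ℝ) < φ := hφ
      rw [Gamma_add_one (by positivity)]
      field_simp
      simp
    · filter_upwards with φ
      simp [rpow_neg_one]
  · simpa using hlim c hc

lemma isBigO_of_limsup {f : ℝ → ℝ} {r : ℝ} {l : Filter ℝ} (hl : ∀ᶠ t in l, 0 < t)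
    (hf : ∀ t > 0, 0 < f t)
    (h : Filter.limsup (fun t => ENNReal.ofReal (f t / t ^ r)) l < ⊤) :
    f =O[l] (fun t => t ^ r) := by
  obtain ⟨b, hb, hb'⟩ := exists_between h
  refine Asymptotics.IsBigO.of_bound b.toReal ?_
  filter_upwards [hl, eventually_lt_of_limsup_lt hb] with t ht hlt
  have hp : 0 < t ^ r := rpow_pos_of_pos ht r
  have h1 := (ENNReal.ofReal_le_iff_le_toReal hb'.ne).1 hlt.le
  rw [norm_of_nonneg (hf t ht).le, norm_of_nonneg hp.le]
  exact (div_le_iff₀ hp).1 h1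

/-- Integrability of the marginal in `φ` that is left once `μ` has been integrated out. -/
lemma marginal_integrable {n : ℕ} (hn : 0 < n) {v c : ℝ} (hv : 0 < v) (hnv : n * v < 1)
    {f : ℝ → ℝ} (hfc : ContinuousOn f (Set.Ioi 0)) {r₀ rinf : ℝ}
    (hf0 : f =O[𝓝[>] 0] (fun t => t ^ r₀)) (hfinf : f =O[atTop] (fun t => t ^ rinf))
    (hcase : (c = 0 ∧ -r₀ < (n : ℝ)) ∨ (0 < c ∧ -r₀ - 1 < (n : ℝ))) :
    IntegrableOn (fun φ : ℝ => f φ * ((Gamma φ ^ n)⁻¹ * v ^ (n * φ) * Gamma (n * φ + c)))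
      (Set.Ioi 0) := by
  have hn' : (0 : ℝ) < n := by exact_mod_cast hn
  have hc : 0 ≤ c := by rcases hcase with h | h <;> linarith [h.1]
  obtain ⟨e, he, hb⟩ : ∃ e : ℝ, ((c = 0 ∧ e = -1) ∨ (0 < c ∧ e = 0)) ∧ -(r₀ + (n + e)) < 1 := by
    rcases hcase with h | h
    · exact ⟨-1, Or.inl ⟨h.1, rfl⟩, by linarith [h.2]⟩
    · exact ⟨0, Or.inr ⟨h.1, rfl⟩, by linarith [h.2]⟩
  have hcont : ContinuousOn
      (fun φ : ℝ => f φ * ((Gamma φ ^ n)⁻¹ * v ^ (n * φ) * Gamma (n * φ + c))) (Set.Ioi 0) := by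
    have hΓ : ContinuousOn Gamma (Set.Ioi 0) := fun t ht =>
      (continuousAt_Gamma ht).continuousWithinAt
    refine hfc.mul ((((hΓ.pow n).inv₀ fun t ht => ?_).mul ?_).mul (hΓ.comp (by fun_prop) ?_))
    · exact (pow_pos (Gamma_pos_of_pos ht) n).ne'
    · exact (Continuous.rpow continuous_const (by fun_prop) fun _ => Or.inl hv.ne').continuousOn
    · intro t (ht : 0 < t)
      simp only [Set.mem_Ioi]
      positivity
  have htop : (fun φ : ℝ => f φ * ((Gamma φ ^ n)⁻¹ * v ^ (n * φ) * Gamma (n * φ + c)))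
      =O[atTop] (fun φ => φ ^ (-(2 : ℝ))) := by
    obtain ⟨K, η, hη, hK⟩ := ratio_tail hn hv hnv hc
    have h1 : (fun φ : ℝ => (Gamma φ ^ n)⁻¹ * v ^ (n * φ) * Gamma (n * φ + c)) =O[atTop]
        (fun φ => φ ^ (n : ℝ) * exp (-η * φ)) := by
      refine Asymptotics.IsBigO.of_bound K ?_
      filter_upwards [eventually_ge_atTop 2] with φ hφ
      have hφ0 : 0 < φ := by linarith
      have hG := Gamma_pos_of_pos hφ0
      have hG2 := Gamma_pos_of_pos (s := n * φ + c) (by positivity)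
      rw [norm_of_nonneg (by positivity), norm_of_nonneg (by positivity)]
      exact hK φ hφ
    have h2 := (isLittleO_exp_neg_mul_rpow_atTop hη (-2 - rinf - n)).isBigO
    have h3 := hfinf.mul (h1.trans
      ((Asymptotics.isBigO_refl (fun φ : ℝ => φ ^ (n : ℝ)) atTop).mul h2))
    refine h3.congr' (EventuallyEq.refl _ _) ?_
    filter_upwards [eventually_gt_atTop 0] with φ hφ
    rw [← rpow_add hφ, ← rpow_add hφ]
    congr 1
    ring
  have hbot : (fun φ : ℝ => f φ * ((Gamma φ ^ n)⁻¹ * v ^ (n * φ) * Gamma (n * φ + c)))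
      =O[𝓝[>] 0] (fun φ => φ ^ (-(-(r₀ + (n + e))))) := by
    have hvc : (fun φ : ℝ => v ^ (n * φ)) =O[𝓝[>] 0] (fun _ => (1 : ℝ)) := by
      have : Continuous (fun φ : ℝ => v ^ (n * φ)) :=
        Continuous.rpow continuous_const (by fun_prop) fun _ => Or.inl hv.ne'
      exact (this.continuousAt.tendsto.mono_left nhdsWithin_le_nhds).isBigO_one ℝ
    have h := hf0.mul (((inv_Gamma_isBigO n).mul hvc).mul (Gamma_isBigO hn he))
    refine h.congr' (EventuallyEq.refl _ _) ?_
    filter_upwards [self_mem_nhdsWithin] with φ hφ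
    have hφ : (0 : ℝ) < φ := hφ
    rw [mul_one, ← rpow_add hφ, ← rpow_add hφ, neg_neg]
  have := mellin_convergent_of_isBigO_scalar (s := 1)
    (hcont.locallyIntegrableOn measurableSet_Ioi) htop (by norm_num) hbot hb
  simpa using this

/-- (Theorem 2.1 of the paper.) In the Stacy model with `α > 0` known,
if `π_μ(μ) ≲ μ^k` on `(0,∞)`, `π_φ(φ) ≲ φ^{r₀}` as `φ → 0⁺` and `π_φ(φ) ≲ φ^{r_∞}`
as `φ → ∞`, and either `k = -1` with `n > -r₀` or `k > -1` with `n > -r₀ - 1`,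
then the posterior for `(φ, μ)` is proper. -/
theorem stacy_alpha_known_posterior_proper
    (n : ℕ) (hn : 2 ≤ n) (x : Fin n → ℝ) (hx : ∀ i, 0 < x i) (hxne : ∃ i j, x i ≠ x j)
    (α : ℝ) (hα : 0 < α)
    (πμ πφ : ℝ → ℝ)
    (hπμc : ContinuousOn πμ (Set.Ioi 0)) (hπφc : ContinuousOn πφ (Set.Ioi 0))
    (hπμ0 : ∀ t > 0, 0 < πμ t) (hπφ0 : ∀ t > 0, 0 < πφ t)
    (k r₀ rinf : ℝ)
    (hμk : ∃ M > 0, ∀ t > 0, πμ t ≤ M * t ^ k)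
    (hφ0 : Filter.limsup (fun t => ENNReal.ofReal (πφ t / t ^ r₀)) (𝓝[>] (0:ℝ)) < ⊤)
    (hφinf : Filter.limsup (fun t => ENNReal.ofReal (πφ t / t ^ rinf)) Filter.atTop < ⊤)
    (hcase : (k = -1 ∧ -r₀ < (n : ℝ)) ∨ (-1 < k ∧ -r₀ - 1 < (n : ℝ))) :
    (∫⁻ φ in Set.Ioi (0:ℝ), ∫⁻ μ in Set.Ioi (0:ℝ),
      ENNReal.ofReal (πφ φ * πμ μ / Real.Gamma φ ^ n *
        (∏ i, x i ^ (α * φ - 1)) * μ ^ ((n : ℝ) * α * φ) *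
        Real.exp (-(μ ^ α * ∑ i, x i ^ α)))) < ⊤ := by
  obtain ⟨M, hM, hμ⟩ := hμk
  have hn0 : 0 < n := by omega
  have hn' : (0 : ℝ) < n := by exact_mod_cast hn0
  have hk : -1 ≤ k := by rcases hcase with h | h <;> linarith [h.1]
  set y : Fin n → ℝ := fun i => x i ^ α with hy
  have hy0 : ∀ i, 0 < y i := fun i => rpow_pos_of_pos (hx i) α
  set S : ℝ := ∑ i, y i with hS
  set g : ℝ := ∏ i, y i ^ ((n : ℝ)⁻¹) with hg
  have hg0 : 0 < g := Finset.prod_pos fun i _ => rpow_pos_of_pos (hy0 i) _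
  -- The strict AM-GM inequality, which is where non-constancy of the data enters.
  have hamgm : g < (n : ℝ)⁻¹ * S := by
    have h := (geom_mean_lt_arith_mean_weighted_iff_of_pos Finset.univ (fun _ => (n : ℝ)⁻¹) y
      (fun _ _ => by positivity) (by simp [hn'.ne']) (fun i _ => (hy0 i).le)).2 (by
        obtain ⟨i, j, hij⟩ := hxne
        refine ⟨i, Finset.mem_univ _, j, Finset.mem_univ _, fun h => hij ?_⟩
        exact (rpow_left_inj (hx i).le (hx j).le hα.ne').1 h)
    rwa [← Finset.mul_sum] at h
  have hS0 : 0 < S := by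
    by_contra hcon
    have : (n : ℝ)⁻¹ * S ≤ 0 := mul_nonpos_of_nonneg_of_nonpos (by positivity) (not_lt.1 hcon)
    linarith
  have hnv : n * (g / S) < 1 := by
    rw [← mul_div_assoc, div_lt_one hS0]
    calc n * g < n * ((n : ℝ)⁻¹ * S) := by gcongr
      _ = S := by field_simp
  set c : ℝ := (k + 1) / α with hcdef
  have hc : 0 ≤ c := div_nonneg (by linarith) hα.le
  have hcase' : (c = 0 ∧ -r₀ < (n : ℝ)) ∨ (0 < c ∧ -r₀ - 1 < (n : ℝ)) := by
    rcases hcase with ⟨h1, h2⟩ | ⟨h1, h2⟩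
    · exact Or.inl ⟨by simp [hcdef, h1], h2⟩
    · exact Or.inr ⟨div_pos (by linarith) hα, h2⟩
  have hint := marginal_integrable hn0 (div_pos hg0 hS0) hnv hπφc
    (isBigO_of_limsup self_mem_nhdsWithin hπφ0 hφ0)
    (isBigO_of_limsup (eventually_gt_atTop 0) hπφ0 hφinf) hcase'
  set B : ℝ := M * (∏ i, (x i)⁻¹) * S ^ (-c) * (1 / α) with hB
  refine lt_of_le_of_lt ?_ (Integrable.lintegral_lt_top (hint.const_mul B))
  refine setLIntegral_mono' measurableSet_Ioi fun φ (hφ : 0 < φ) => ?_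
  have hprod : ∏ i, x i ^ (α * φ - 1) = (∏ i, (x i)⁻¹) * g ^ (n * φ) := by
    rw [hg, ← finsetProd_rpow _ _ fun i _ => (rpow_pos_of_pos (hy0 i) _).le,
      ← Finset.prod_mul_distrib]
    refine Finset.prod_congr rfl fun i _ => ?_
    rw [← rpow_mul (hy0 i).le, hy, ← rpow_mul (hx i).le, rpow_sub_one (hx i).ne',
      show α * ((n : ℝ)⁻¹ * (n * φ)) = α * φ by field_simp]
    ring
  have hΓ := Gamma_pos_of_pos hφ
  have hq : -1 < k + n * α * φ := by
    have : 0 < n * α * φ := by positivity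
    linarith
  have hqc : (k + n * α * φ + 1) / α = n * φ + c := by
    rw [hcdef]; field_simp; ring
  have hP : 0 < ∏ i, (x i)⁻¹ := Finset.prod_pos fun i _ => inv_pos.2 (hx i)
  have hφφ := hπφ0 φ hφ
  set D : ℝ := πφ φ * M / Gamma φ ^ n * ((∏ i, (x i)⁻¹) * g ^ (n * φ)) with hD
  have hDint := (integrableOn_rpow_mul_exp_neg_mul_rpow hq hα hS0).const_mul D
  calc _ ≤ ∫⁻ μ in Set.Ioi (0 : ℝ),
        ENNReal.ofReal (D * (μ ^ (k + n * α * φ) * exp (-S * μ ^ α))) := by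
        refine setLIntegral_mono' measurableSet_Ioi fun μ (hμ0 : 0 < μ) => ?_
        apply ENNReal.ofReal_le_ofReal
        have h1 := hμ μ hμ0
        rw [hprod, rpow_add hμ0, show -S * μ ^ α = -(μ ^ α * S) by ring]
        calc _ ≤ πφ φ * (M * μ ^ k) / Gamma φ ^ n * ((∏ i, (x i)⁻¹) * g ^ (n * φ)) *
              μ ^ ((n : ℝ) * α * φ) * exp (-(μ ^ α * S)) := by gcongr
          _ = _ := by rw [hD]; ring
    _ = ENNReal.ofReal (D * (S ^ (-(n * φ + c)) * (1 / α) * Gamma (n * φ + c))) := by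
        rw [← ofReal_integral_eq_lintegral_ofReal hDint, integral_const_mul,
          integral_rpow_mul_exp_neg_mul_rpow hα hq hS0, neg_div, hqc]
        filter_upwards [ae_restrict_mem measurableSet_Ioi] with μ hμ0
        have hμ0 : (0 : ℝ) < μ := hμ0
        simp only [Pi.zero_apply]
        positivity
    _ = _ := by
        congr 1
        rw [hD, hB, neg_add, rpow_add hS0, div_rpow hg0.le hS0.le, rpow_neg hS0.le (n * φ)]
        ring
end

section
/- Fix α > 0, and let π : (0,∞)² → (0,∞) be a measurable prior density in the arguments (μ,φ). Suppose there are continuous functions π_μ, π_φ : (0,∞) → (0,∞) with π(μ,φ) ≳ π_μ(μ)·π_φ(φ) on (0,∞)², that π_μ(μ) ≳ μ^k on (0,∞) for some k ∈ ℝ, and that one of the following holds: (i) k < −1; (ii) k > −1 and π_φ(φ) ≳ φ^{r₀} as φ → 0⁺ with n ≤ −r₀ − 1; (iii) k = −1 and π_φ(φ) ≳ φ^{r₀} as φ → 0⁺ with n ≤ −r₀. Then ∫_0^∞ ∫_0^∞ π(μ,φ) Γ(φ)^{−n} (∏_{i=1}^n x_i^{αφ−1}) μ^{nαφ} exp(−μ^α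 Σ_{i=1}^n x_i^α) dμ dφ = ∞; i.e., the posterior for (φ,μ) in the Stacy model with α known is improper. -/
/-!
Only small `φ` and `μ ∈ (0, 1)` matter. There the exponential and the product over the data are
bounded below by positive constants, and `1 / Γ(φ) ≥ φ`, so that the inner integral is at least
`C · π_φ(φ) · φ ^ n · ∫_0^1 μ ^ (k + nαφ) dμ` (`exists_inner_lower_bound`).

* If `k < -1`, the remaining `μ`-integral is infinite for every sufficiently small `φ`.
* If `k ≥ -1`, it equals `1 / (k + 1 + nαφ)`, which is bounded below when `k > -1` and is
  `1 / (nαφ)` when `k = -1`. The growth of `π_φ` at `0` then bounds the inner integral below by a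
  multiple of `φ ^ (r₀ + n)`, respectively `φ ^ (r₀ + n - 1)`, whose exponent is at most `-1`;
  such a power is not integrable at `0`.
-/

open MeasureTheory Real Filter Topology

lemma lintegral_rpow_eq_top {s t : ℝ} (ht : 0 < t) (hs : s ≤ -1) :
    ∫⁻ y in Set.Ioo (0:ℝ) t, ENNReal.ofReal (y ^ s) = ⊤ := by
  by_contra h
  have hint : IntegrableOn (fun y : ℝ => y ^ s) (Set.Ioo 0 t) := by
    refine ⟨(measurable_id.pow_const s).aestronglyMeasurable, ?_⟩
    rw [hasFiniteIntegral_iff_ofReal]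
    · exact lt_top_iff_ne_top.2 h
    · filter_upwards [ae_restrict_mem measurableSet_Ioo] with y hy
      exact rpow_nonneg hy.1.le s
  rw [intervalIntegral.integrableOn_Ioo_rpow_iff ht] at hint
  linarith

lemma lintegral_rpow_unit {s : ℝ} (hs : -1 < s) :
    ∫⁻ y in Set.Ioo (0:ℝ) 1, ENNReal.ofReal (y ^ s) = ENNReal.ofReal (1 / (s + 1)) := by
  have hint : IntegrableOn (fun y : ℝ => y ^ s) (Set.Ioo 0 1) :=
    (intervalIntegral.integrableOn_Ioo_rpow_iff one_pos).2 hs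
  rw [← ofReal_integral_eq_lintegral_ofReal hint, ← integral_Ioc_eq_integral_Ioo,
    ← intervalIntegral.integral_of_le zero_le_one, integral_rpow (Or.inl hs), one_rpow,
    zero_rpow (by linarith), sub_zero]
  filter_upwards [ae_restrict_mem measurableSet_Ioo] with y hy
  exact rpow_nonneg hy.1.le s

/-- Since `Γ(φ) = Γ(φ + 1) / φ`, this is the bound `Γ ≤ 1` on `[1, 2]`, which follows from convexity
and `Γ(1) = Γ(2) = 1`. -/
lemma le_inv_Gamma {φ : ℝ} (h0 : 0 < φ) (h1 : φ ≤ 1) : φ ≤ (Real.Gamma φ)⁻¹ := by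
  have h := convexOn_Gamma.le_max_of_mem_Icc (x := 1) (y := 2) (z := φ + 1)
    (by simp) (by simp) ⟨by linarith, by linarith⟩
  rw [Gamma_one, Gamma_two, max_self, Gamma_add_one h0.ne'] at h
  rw [← one_div, le_div_iff₀ (Gamma_pos_of_pos h0)]
  exact h

lemma exists_prod_lower_bound {n : ℕ} {x : Fin n → ℝ} (hx : ∀ i, 0 < x i) (α : ℝ) :
    ∃ c > 0, ∀ φ ∈ Set.Icc (0:ℝ) 1, c ≤ ∏ i, x i ^ (α * φ - 1) := by
  have hc : Continuous fun φ : ℝ => ∏ i, x i ^ (α * φ - 1) :=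
    continuous_finsetProd _ fun i _ =>
      continuous_const.rpow (by fun_prop) fun _ => Or.inl (hx i).ne'
  obtain ⟨φ₀, -, h⟩ := isCompact_Icc.exists_isMinOn (Set.nonempty_Icc.2 zero_le_one) hc.continuousOn
  exact ⟨_, Finset.prod_pos fun i _ => rpow_pos_of_pos (hx i) _, fun φ hφ => h hφ⟩

/-- The ratio condition `limsup t ^ r / g t < ∞` as `t → 0⁺`, made effective on some `(0, δ)`. -/
lemma exists_rpow_lower_bound {g : ℝ → ℝ} (hg : ∀ t > 0, 0 < g t) {r : ℝ}
    (h : Filter.limsup (fun t => ENNReal.ofReal (t ^ r / g t)) (𝓝[>] (0:ℝ)) < ⊤) :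
    ∃ c > 0, ∃ δ > 0, ∀ t ∈ Set.Ioo 0 δ, c * t ^ r ≤ g t := by
  obtain ⟨M, hM, hM'⟩ := exists_between h
  have hev := eventually_lt_of_limsup_lt hM
  obtain ⟨δ, hδ, hsub⟩ := mem_nhdsGT_iff_exists_Ioo_subset.1 hev
  refine ⟨(M.toReal + 1)⁻¹, by positivity, δ, hδ, fun t ht => ?_⟩
  have h1 : ENNReal.ofReal (t ^ r / g t) < M := hsub ht
  have h2 : t ^ r / g t ≤ M.toReal := (ENNReal.ofReal_le_iff_le_toReal hM'.ne).1 h1.le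
  have hgt := hg t ht.1
  rw [div_le_iff₀ hgt] at h2
  rw [inv_mul_le_iff₀ (by positivity)]
  nlinarith

/-- Lower bound for the inner integral when `0 < φ < 1`, obtained by restricting to `μ < 1`. -/
lemma exists_inner_lower_bound {n : ℕ} {x : Fin n → ℝ} (hx : ∀ i, 0 < x i) {α : ℝ} (hα : 0 < α)
    {prior : ℝ → ℝ → ℝ} {πμ πφ : ℝ → ℝ} (hπφ0 : ∀ t > 0, 0 < πφ t)
    (hprod : ∃ c > 0, ∀ μ > 0, ∀ φ > 0, c * (πμ μ * πφ φ) ≤ prior μ φ) {k : ℝ}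
    (hμk : ∃ c > 0, ∀ t > 0, c * t ^ k ≤ πμ t) :
    ∃ C > 0, ∀ φ ∈ Set.Ioo (0:ℝ) 1,
      ENNReal.ofReal (C * πφ φ * φ ^ n) *
          ∫⁻ μ in Set.Ioo (0:ℝ) 1, ENNReal.ofReal (μ ^ (k + n * α * φ)) ≤
        ∫⁻ μ in Set.Ioi (0:ℝ),
          ENNReal.ofReal (prior μ φ / Real.Gamma φ ^ n *
            (∏ i, x i ^ (α * φ - 1)) * μ ^ ((n : ℝ) * α * φ) *
            Real.exp (-(μ ^ α * ∑ i, x i ^ α))) := by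
  obtain ⟨c₁, hc₁, hprod⟩ := hprod
  obtain ⟨c₂, hc₂, hμk⟩ := hμk
  obtain ⟨c₃, hc₃, hx3⟩ := exists_prod_lower_bound hx α
  set S := ∑ i, x i ^ α
  have hS : 0 ≤ S := Finset.sum_nonneg fun i _ => rpow_nonneg (hx i).le _
  refine ⟨c₁ * c₂ * c₃ * Real.exp (-S), by positivity, fun φ hφ => ?_⟩
  have hφ0 := hφ.1
  have hp := hπφ0 φ hφ0
  rw [← lintegral_const_mul' _ _ ENNReal.ofReal_ne_top]
  refine le_trans (setLIntegral_mono' measurableSet_Ioo fun μ hμ => ?_)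
    (lintegral_mono_set Set.Ioo_subset_Ioi_self)
  have hμ0 := hμ.1
  rw [← ENNReal.ofReal_mul (by positivity)]
  refine ENNReal.ofReal_le_ofReal ?_
  have hprior : c₁ * (c₂ * μ ^ k * πφ φ) ≤ prior μ φ :=
    le_trans (by gcongr; exact hμk μ hμ0) (hprod μ hμ0 φ hφ0)
  have hGam : φ ^ n ≤ (Real.Gamma φ ^ n)⁻¹ := by
    rw [← inv_pow]
    exact pow_le_pow_left₀ hφ0.le (le_inv_Gamma hφ0 hφ.2.le) n
  have hexp : Real.exp (-S) ≤ Real.exp (-(μ ^ α * S)) := by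
    have : μ ^ α ≤ 1 := rpow_le_one hμ0.le hμ.2.le hα.le
    gcongr
    exact mul_le_of_le_one_left hS this
  have hpr := hx3 φ ⟨hφ0.le, hφ.2.le⟩
  have hprior0 : 0 ≤ prior μ φ := le_trans (by positivity) hprior
  have hGam0 : 0 ≤ (Real.Gamma φ ^ n)⁻¹ := le_trans (by positivity) hGam
  have hpr0 : 0 ≤ ∏ i, x i ^ (α * φ - 1) := hc₃.le.trans hpr
  calc c₁ * c₂ * c₃ * Real.exp (-S) * πφ φ * φ ^ n * μ ^ (k + n * α * φ)
      = c₁ * (c₂ * μ ^ k * πφ φ) * φ ^ n * c₃ * μ ^ ((n : ℝ) * α * φ) * Real.exp (-S) := by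
        rw [rpow_add hμ0]; ring
    _ ≤ prior μ φ * (Real.Gamma φ ^ n)⁻¹ * (∏ i, x i ^ (α * φ - 1)) * μ ^ ((n : ℝ) * α * φ) *
          Real.exp (-(μ ^ α * S)) := by gcongr
    _ = _ := by rw [div_eq_mul_inv]

lemma lintegral_eq_top_of_rpow_le {F : ℝ → ENNReal} {c s δ : ℝ} (hc : 0 < c) (hδ : 0 < δ)
    (hs : s ≤ -1) (h : ∀ φ ∈ Set.Ioo 0 δ, ENNReal.ofReal (c * φ ^ s) ≤ F φ) :
    ∫⁻ φ in Set.Ioi (0:ℝ), F φ = ⊤ := by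
  rw [← top_le_iff]
  calc (⊤ : ENNReal) = ENNReal.ofReal c * ∫⁻ φ in Set.Ioo (0:ℝ) δ, ENNReal.ofReal (φ ^ s) := by
        rw [lintegral_rpow_eq_top hδ hs, ENNReal.mul_top (by simpa using hc)]
    _ = ∫⁻ φ in Set.Ioo (0:ℝ) δ, ENNReal.ofReal (c * φ ^ s) := by
        rw [← lintegral_const_mul' _ _ ENNReal.ofReal_ne_top]
        simp_rw [ENNReal.ofReal_mul hc.le]
    _ ≤ ∫⁻ φ in Set.Ioo (0:ℝ) δ, F φ := setLIntegral_mono' measurableSet_Ioo h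
    _ ≤ _ := lintegral_mono_set Set.Ioo_subset_Ioi_self

/-- (Theorem 2.2 of the paper.) In the Stacy model with `α > 0` known,
if the prior `π(μ,φ)` dominates a product `π_μ(μ)π_φ(φ)` with `π_μ(μ) ≳ μ^k`, and either
(i) `k < -1`, (ii) `k > -1` and `π_φ(φ) ≳ φ^{r₀}` as `φ → 0⁺` with `n ≤ -r₀ - 1`, or
(iii) `k = -1` and `π_φ(φ) ≳ φ^{r₀}` as `φ → 0⁺` with `n ≤ -r₀`,
then the posterior for `(φ, μ)` is improper. -/
theorem stacy_alpha_known_posterior_improper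
    (n : ℕ) (hn : 2 ≤ n) (x : Fin n → ℝ) (hx : ∀ i, 0 < x i) (hxne : ∃ i j, x i ≠ x j)
    (α : ℝ) (hα : 0 < α)
    (prior : ℝ → ℝ → ℝ) (hπm : Measurable fun p : ℝ × ℝ => prior p.1 p.2)
    (hπ0 : ∀ μ > 0, ∀ φ > 0, 0 < prior μ φ)
    (πμ πφ : ℝ → ℝ)
    (hπμc : ContinuousOn πμ (Set.Ioi 0)) (hπφc : ContinuousOn πφ (Set.Ioi 0))
    (hπμ0 : ∀ t > 0, 0 < πμ t) (hπφ0 : ∀ t > 0, 0 < πφ t)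
    (hprod : ∃ c > 0, ∀ μ > 0, ∀ φ > 0, c * (πμ μ * πφ φ) ≤ prior μ φ)
    (k : ℝ)
    (hμk : ∃ c > 0, ∀ t > 0, c * t ^ k ≤ πμ t)
    (hcase :
      k < -1 ∨
      (-1 < k ∧ ∃ r₀ : ℝ,
        Filter.limsup (fun t => ENNReal.ofReal (t ^ r₀ / πφ t)) (𝓝[>] (0:ℝ)) < ⊤ ∧
        (n : ℝ) ≤ -r₀ - 1) ∨
      (k = -1 ∧ ∃ r₀ : ℝ,
        Filter.limsup (fun t => ENNReal.ofReal (t ^ r₀ / πφ t)) (𝓝[>] (0:ℝ)) < ⊤ ∧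
        (n : ℝ) ≤ -r₀)) :
    (∫⁻ φ in Set.Ioi (0:ℝ), ∫⁻ μ in Set.Ioi (0:ℝ),
      ENNReal.ofReal (prior μ φ / Real.Gamma φ ^ n *
        (∏ i, x i ^ (α * φ - 1)) * μ ^ ((n : ℝ) * α * φ) *
        Real.exp (-(μ ^ α * ∑ i, x i ^ α)))) = ⊤ := by
  obtain ⟨C, hC, hin⟩ := exists_inner_lower_bound hx hα hπφ0 hprod hμk
  have hn0 : (0:ℝ) < n := by exact_mod_cast (by omega : 0 < n)
  have hnα : 0 < (n:ℝ) * α := mul_pos hn0 hα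
  rcases hcase with hk | ⟨hk, r, hr, hnr⟩ | ⟨hk, r, hr, hnr⟩
  · -- `k + nαφ ≤ -1` holds for `φ < (-1 - k) / (nα)`, and then the inner integral is infinite.
    have hδ : 0 < min 1 ((-1 - k) / (n * α)) :=
      lt_min one_pos (div_pos (by linarith) hnα)
    refine lintegral_eq_top_of_rpow_le one_pos hδ le_rfl fun φ hφ => le_top.trans ?_
    have hφ1 : φ ∈ Set.Ioo (0:ℝ) 1 := ⟨hφ.1, hφ.2.trans_le (min_le_left _ _)⟩
    have hφ2 := hφ.2.trans_le (min_le_right _ _)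
    rw [lt_div_iff₀ hnα] at hφ2
    have hp := hπφ0 φ hφ.1
    have hpos : 0 < C * πφ φ * φ ^ n := mul_pos (mul_pos hC hp) (pow_pos hφ.1 n)
    refine le_trans ?_ (hin φ hφ1)
    rw [lintegral_rpow_eq_top one_pos (by linarith), ENNReal.mul_top (by simpa using hpos)]
  · obtain ⟨c, hc, δ, hδ, hg⟩ := exists_rpow_lower_bound hπφ0 hr
    have hK : 0 < k + 1 + n * α := by linarith
    refine lintegral_eq_top_of_rpow_le (c := C * c * (1 / (k + 1 + n * α))) (s := r + n)
      (by positivity) (lt_min one_pos hδ) (by linarith) fun φ hφ => ?_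
    have hφ0 := hφ.1
    have hφ1 : φ < 1 := hφ.2.trans_le (min_le_left _ _)
    have hgφ := hg φ ⟨hφ0, hφ.2.trans_le (min_le_right _ _)⟩
    have hp := hπφ0 φ hφ0
    have hnφ : 0 < n * α * φ := mul_pos hnα hφ0
    refine le_trans ?_ (hin φ ⟨hφ0, hφ1⟩)
    rw [lintegral_rpow_unit (by linarith), ← ENNReal.ofReal_mul (by positivity)]
    refine ENNReal.ofReal_le_ofReal ?_
    have hden : 1 / (k + 1 + n * α) ≤ 1 / (k + n * α * φ + 1) :=
      one_div_le_one_div_of_le (by linarith) (by nlinarith)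
    calc C * c * (1 / (k + 1 + n * α)) * φ ^ (r + n)
        = C * (c * φ ^ r) * φ ^ n * (1 / (k + 1 + n * α)) := by
          rw [rpow_add hφ0, rpow_natCast]; ring
      _ ≤ _ := by gcongr
  · obtain ⟨c, hc, δ, hδ, hg⟩ := exists_rpow_lower_bound hπφ0 hr
    refine lintegral_eq_top_of_rpow_le (c := C * c * (1 / (n * α))) (s := r + n - 1)
      (by positivity) (lt_min one_pos hδ) (by linarith) fun φ hφ => ?_
    have hφ0 := hφ.1
    have hφ1 : φ < 1 := hφ.2.trans_le (min_le_left _ _)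
    have hgφ := hg φ ⟨hφ0, hφ.2.trans_le (min_le_right _ _)⟩
    have hp := hπφ0 φ hφ0
    have hnφ : 0 < n * α * φ := mul_pos hnα hφ0
    refine le_trans ?_ (hin φ ⟨hφ0, hφ1⟩)
    rw [lintegral_rpow_unit (by linarith), ← ENNReal.ofReal_mul (by positivity)]
    refine ENNReal.ofReal_le_ofReal ?_
    have hden : k + n * α * φ + 1 = n * α * φ := by rw [hk]; ring
    rw [hden]
    calc C * c * (1 / (n * α)) * φ ^ (r + n - 1)
        = C * (c * φ ^ r) * φ ^ n * (1 / (n * α * φ)) := by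
          rw [rpow_sub hφ0, rpow_add hφ0, rpow_natCast, rpow_one]
          field_simp
      _ ≤ _ := by gcongr
end

section
/- Fix α > 0, and let π_μ, π_φ : (0,∞) → (0,∞) be continuous with π_μ(μ) ∝ μ^k on (0,∞), π_φ(φ) ∝ φ^{r₀} as φ → 0⁺, and π_φ(φ) ∝ φ^{r_∞} as φ → ∞, where k, r₀, r_∞ ∈ ℝ. Then ∫_0^∞ ∫_0^∞ π_φ(φ) π_μ(μ) Γ(φ)^{−n} (∏_{i=1}^n x_i^{αφ−1}) μ^{nαφ} exp(−μ^α Σ_{i=1}^n x_i^α) dμ dφ < ∞ if and only if (k = −1 and n > −r₀) or (k > −1 and n > −r₀ − 1); and in the proper case, for all natural numbers r and s, the integral with the integrand multiplied by the extra factor φ^r μ^s is also finite (all posterior moments of φ and μ are finite). -/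
/-!
Integrating out `μ` against `π_μ(μ) ∝ μ^k` gives a Gamma integral, which diverges on an interval
of values of `φ` if `k < -1` (`lintegral_mu_eq_top`) and otherwise leaves, up to constants,
`π_φ(φ)` times
`stacyKernel x α c φ = ∏ x_i^(αφ-1) * S^(-(nφ+c)) * Γ(nφ+c) / Γ(φ)^n`,
with `c = (k+1)/α ≥ 0` and `S = ∑ x_i^α`.

* At `φ → 0`, `1/Γ(φ) ~ φ`, and `Γ(nφ+c)` is of order `φ⁻¹` if `c = 0` and of order `1` if
  `c > 0` (`stacyKernel_zero`). So the integrand in `φ` is of order `φ^(r₀+n-1)` if `k = -1` and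
  `φ^(r₀+n)` if `k > -1`, which gives the two conditions on `n`.
* At `φ → ∞`, `Γ(nφ+c)/Γ(φ)^n` is at most a polynomial times `n^(nφ)` (`Gamma_ratio_le`, obtained
  from the bound `n^(nm)` on the multinomial coefficient `(nm)!/(m!)^n` rather than from
  Stirling's formula). The exponential factors combine into
  `(∏ x_i^α * n^n / S^n)^φ`, whose base is `< 1` by the strict AM-GM inequality, so the integral
  converges at infinity for every `r_∞` (`stacyKernel_tail`).

The factors `φ^r` and `μ^s` of the moments only improve the behaviour at `φ = 0` (the second
replaces `k` by `k + s`) and do not affect the exponential decay.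
-/

open MeasureTheory Real Filter Topology

/-! ### Bounds for the Gamma function, and the AM-GM inequality -/

lemma continuousOn_Gamma_pos : ContinuousOn Real.Gamma (Set.Ioi 0) := fun s hs =>
  (Real.differentiableAt_Gamma fun m => by
    have : (0:ℝ) < s := hs
    have : (0:ℝ) ≤ m := m.cast_nonneg
    linarith).continuousAt.continuousWithinAt

/-- The multinomial coefficient `(nm)! / (m!)^n` is at most `n^(nm)`. -/
lemma factorial_mul_le (n m : ℕ) :
    (n * m).factorial ≤ m.factorial ^ n * n ^ (n * m) := by
  induction m with
  | zero => simp
  | succ m ih =>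
    calc (n * (m + 1)).factorial = (n * m).factorial * (n * m + 1).ascFactorial n := by
          rw [Nat.factorial_mul_ascFactorial, mul_add, mul_one]
      _ ≤ (m.factorial ^ n * n ^ (n * m)) * (n * m + n) ^ n :=
          Nat.mul_le_mul ih (Nat.ascFactorial_le_pow_add _ _)
      _ = (m + 1).factorial ^ n * n ^ (n * (m + 1)) := by
          rw [Nat.factorial_succ, show n * m + n = n * (m + 1) by ring, mul_pow, mul_pow,
            show n * (m + 1) = n * m + n by ring, pow_add]
          ring

/-- A substitute for Stirling's formula: `Γ(nφ + c) / Γ(φ)^n` is at most `n^(nφ)` times a monomial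
in `φ`. The factorials of `nm + D` and `m = ⌊φ⌋₊` sandwich the two Gamma values. -/
lemma Gamma_ratio_le (n : ℕ) (c : ℝ) (hc : 0 ≤ c) :
    ∃ C > 0, ∃ N : ℕ, ∀ φ : ℝ, 3 ≤ φ →
      Real.Gamma (n * φ + c) ≤ Real.Gamma φ ^ n * (C * φ ^ N) * ((n:ℝ) ^ n) ^ φ := by
  rcases Nat.eq_zero_or_pos n with rfl | hn
  · refine ⟨Real.Gamma c + 1, ?_, 0, fun φ _ => ?_⟩
    · have := Real.Gamma_nonneg_of_nonneg hc
      linarith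
    · simp
  -- chosen so that `nφ + c ≤ nm + D` for `m = ⌊φ⌋₊`
  set D : ℕ := n + ⌈c⌉₊ with hD
  have hn1 : (1:ℝ) ≤ n := by exact_mod_cast hn
  refine ⟨((n:ℝ) + D) ^ D, by positivity, n + D, fun φ hφ => ?_⟩
  set m := ⌊φ⌋₊ with hm
  have hφ0 : 0 ≤ φ := by linarith
  have hmφ : (m:ℝ) ≤ φ := Nat.floor_le hφ0
  have hφm : φ < m + 1 := Nat.lt_floor_add_one φ
  have hm3 : 3 ≤ m := Nat.le_floor (by exact_mod_cast hφ)
  have hm3' : (3:ℝ) ≤ m := by exact_mod_cast hm3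
  have hcc : c ≤ ⌈c⌉₊ := Nat.le_ceil c
  have hDr : (D:ℝ) = n + ⌈c⌉₊ := by rw [hD]; push_cast; ring
  have h1 : n * φ + c ≤ (((n * m + D : ℕ)) : ℝ) + 1 := by
    push_cast
    nlinarith
  have h2 : Real.Gamma (n * φ + c) ≤ ((n * m + D).factorial : ℝ) := by
    rw [← Real.Gamma_nat_eq_factorial]
    refine Real.Gamma_strictMonoOn_Ici.monotoneOn ?_ ?_ h1
    · simp only [Set.mem_Ici]; nlinarith
    · simp only [Set.mem_Ici]; nlinarith
  have h3 : ((n * m + D).factorial : ℝ) ≤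
      (m.factorial : ℝ) ^ n * (n:ℝ) ^ (n * m) * ((n:ℝ) * m + D) ^ D := by
    have : (n * m + D).factorial ≤ m.factorial ^ n * n ^ (n * m) * (n * m + D) ^ D := by
      rw [← Nat.factorial_mul_ascFactorial]
      exact Nat.mul_le_mul (factorial_mul_le n m) (Nat.ascFactorial_le_pow_add _ _)
    exact_mod_cast this
  have h4 : (m.factorial : ℝ) ≤ φ * Real.Gamma φ := by
    rw [← Real.Gamma_nat_eq_factorial, Real.Gamma_add_one (by positivity)]
    have : Real.Gamma m ≤ Real.Gamma φ :=
      Real.Gamma_strictMonoOn_Ici.monotoneOn (by simp only [Set.mem_Ici]; linarith)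
        (by simp only [Set.mem_Ici]; linarith) hmφ
    exact mul_le_mul hmφ this (Real.Gamma_nonneg_of_nonneg (by positivity)) hφ0
  have h5 : (n:ℝ) ^ (n * m) ≤ ((n:ℝ) ^ n) ^ φ := by
    rw [pow_mul, ← Real.rpow_natCast _ m]
    exact Real.rpow_le_rpow_of_exponent_le (one_le_pow₀ hn1) hmφ
  have h6 : (n:ℝ) * m + D ≤ (n + D) * φ := by
    have : (0:ℝ) ≤ D := D.cast_nonneg
    nlinarith
  have hΓ : 0 < Real.Gamma φ := Real.Gamma_pos_of_pos (by linarith)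
  calc Real.Gamma (n * φ + c) ≤ _ := h2.trans h3
    _ ≤ (φ * Real.Gamma φ) ^ n * ((n:ℝ) ^ n) ^ φ * ((n + D) * φ) ^ D := by gcongr
    _ = _ := by rw [mul_pow, mul_pow, pow_add]; ring

/-- Strict AM-GM inequality, raised to the power `n` and cleared of denominators. -/
lemma prod_mul_lt_sum_pow (n : ℕ) (hn : 0 < n) (y : Fin n → ℝ) (hy : ∀ i, 0 < y i)
    (hne : ∃ i j, y i ≠ y j) : (∏ i, y i) * (n:ℝ) ^ n < (∑ i, y i) ^ n := by
  obtain ⟨i, j, hij⟩ := hne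
  have hn' : (0:ℝ) < n := by exact_mod_cast hn
  have h := (Real.geom_mean_lt_arith_mean_weighted_iff_of_pos Finset.univ
    (fun _ : Fin n => (1:ℝ) / n) y (fun _ _ => by positivity)
    (by simp [hn'.ne']) (fun i _ => (hy i).le)).2 ⟨i, Finset.mem_univ _, j, Finset.mem_univ _, hij⟩
  rw [Real.finsetProd_rpow _ _ (fun i _ => (hy i).le), ← Finset.mul_sum] at h
  have hP : 0 < ∏ i, y i := Finset.prod_pos fun i _ => hy i
  have h' := pow_lt_pow_left₀ h (by positivity) hn.ne'
  rw [← Real.rpow_natCast, ← Real.rpow_mul hP.le, mul_pow, div_pow, one_pow,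
    one_div_mul_cancel hn'.ne', Real.rpow_one, one_div_mul_eq_div,
    lt_div_iff₀ (by positivity)] at h'
  exact h'

/-! ### The kernel left after integrating out `μ` -/

/-- The `φ`-marginal of the posterior divided by the prior `π_φ`, up to a constant factor: the
result of integrating `μ^(nαφ + αc - 1) exp(-μ^α S)` over `μ` with `S = ∑ x_i^α`. -/
noncomputable def stacyKernel {n : ℕ} (x : Fin n → ℝ) (α c φ : ℝ) : ℝ :=
  (∏ i, x i ^ (α * φ - 1)) * (∑ i, x i ^ α) ^ (-(n * φ + c)) * Real.Gamma (n * φ + c) /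
    Real.Gamma φ ^ n

lemma stacyKernel_pos {n : ℕ} (hn : 2 ≤ n) {x : Fin n → ℝ} (hx : ∀ i, 0 < x i) (α : ℝ)
    {c φ : ℝ} (hφ : 0 < φ) (hc : 0 ≤ c) : 0 < stacyKernel x α c φ := by
  have : Nonempty (Fin n) := ⟨⟨0, by omega⟩⟩
  have hS : 0 < ∑ i, x i ^ α :=
    Finset.sum_pos (fun i _ => Real.rpow_pos_of_pos (hx i) _) Finset.univ_nonempty
  have hP : 0 < ∏ i, x i ^ (α * φ - 1) :=
    Finset.prod_pos fun i _ => Real.rpow_pos_of_pos (hx i) _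
  have hn' : (0:ℝ) < n := by exact_mod_cast (by omega : 0 < n)
  have := Real.Gamma_pos_of_pos hφ
  have := Real.Gamma_pos_of_pos (show 0 < n * φ + c by positivity)
  unfold stacyKernel
  positivity

/-- Exponential decay at infinity; the rate is governed by the ratio of the geometric to the
arithmetic mean of the `x_i^α`, which is `< 1` as the data are not all equal. -/
lemma stacyKernel_tail {n : ℕ} (hn : 2 ≤ n) {x : Fin n → ℝ} (hx : ∀ i, 0 < x i)
    (hxne : ∃ i j, x i ≠ x j) {α c : ℝ} (hα : 0 < α) (hc : 0 ≤ c) :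
    ∃ C > 0, ∃ N : ℕ, ∃ b > 0, ∀ φ : ℝ, 3 ≤ φ →
      stacyKernel x α c φ ≤ C * φ ^ N * Real.exp (-b * φ) := by
  have : Nonempty (Fin n) := ⟨⟨0, by omega⟩⟩
  have hn' : (0:ℝ) < n := by exact_mod_cast (by omega : 0 < n)
  set S := ∑ i, x i ^ α with hSdef
  have hS : 0 < S :=
    Finset.sum_pos (fun i _ => Real.rpow_pos_of_pos (hx i) _) Finset.univ_nonempty
  set Q := ∏ i, x i ^ α with hQdef
  have hQ : 0 < Q := Finset.prod_pos fun i _ => Real.rpow_pos_of_pos (hx i) _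
  set P := ∏ i, x i with hPdef
  have hP : 0 < P := Finset.prod_pos fun i _ => hx i
  have hlt : Q * (n:ℝ) ^ n < S ^ n := by
    refine prod_mul_lt_sum_pow n (by omega) (fun i => x i ^ α)
      (fun i => Real.rpow_pos_of_pos (hx i) _) ?_
    obtain ⟨i, j, hij⟩ := hxne
    exact ⟨i, j, fun h => hij ((Real.rpow_left_inj (hx i).le (hx j).le hα.ne').1 h)⟩
  set q := Q * (n:ℝ) ^ n / S ^ n with hqdef
  have hq0 : 0 < q := by positivity
  have hq1 : q < 1 := (div_lt_one (by positivity)).2 hlt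
  obtain ⟨C, hC, N, hCN⟩ := Gamma_ratio_le n c hc
  refine ⟨P⁻¹ * S ^ (-c) * C, by positivity, N, -Real.log q,
    neg_pos.2 (Real.log_neg hq0 hq1), fun φ hφ => ?_⟩
  have hΓ : 0 < Real.Gamma φ := Real.Gamma_pos_of_pos (by linarith)
  have e1 : ∏ i, x i ^ (α * φ - 1) = P⁻¹ * Q ^ φ := by
    rw [hPdef, hQdef, ← Real.finsetProd_rpow _ _ (fun i _ => (Real.rpow_pos_of_pos (hx i) _).le),
      ← Finset.prod_inv_distrib, ← Finset.prod_mul_distrib]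
    refine Finset.prod_congr rfl fun i _ => ?_
    rw [Real.rpow_sub (hx i), Real.rpow_one, Real.rpow_mul (hx i).le]
    ring
  have e2 : S ^ (-(n * φ + c)) = S ^ (-c) * ((S ^ n) ^ φ)⁻¹ := by
    rw [← Real.rpow_natCast, ← Real.rpow_mul hS.le, ← Real.rpow_neg hS.le, ← Real.rpow_add hS]
    congr 1; ring
  have e3 : Real.exp (- -Real.log q * φ) = Q ^ φ * ((n:ℝ) ^ n) ^ φ * ((S ^ n) ^ φ)⁻¹ := by
    rw [neg_neg, ← Real.rpow_def_of_pos hq0, hqdef, Real.div_rpow (by positivity) (by positivity),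
      Real.mul_rpow hQ.le (by positivity)]
    rfl
  unfold stacyKernel
  rw [e3, ← hSdef, e1, e2, div_le_iff₀ (by positivity)]
  calc P⁻¹ * Q ^ φ * (S ^ (-c) * ((S ^ n) ^ φ)⁻¹) * Real.Gamma (n * φ + c)
      ≤ P⁻¹ * Q ^ φ * (S ^ (-c) * ((S ^ n) ^ φ)⁻¹) *
        (Real.Gamma φ ^ n * (C * φ ^ N) * ((n:ℝ) ^ n) ^ φ) := by
        gcongr
        exact hCN φ hφ
    _ = _ := by ring

/-- Behaviour at zero: since `Γ(φ) = Γ(φ + 1) / φ`, the kernel is `φ^(n - 1)` (if `c = 0`) or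
`φ^n` (if `c > 0`) times a factor that is positive and continuous up to the endpoint `0`. -/
lemma stacyKernel_zero {n : ℕ} (hn : 2 ≤ n) {x : Fin n → ℝ} (hx : ∀ i, 0 < x i)
    (α : ℝ) {c : ℝ} (hc : 0 ≤ c) :
    ∃ V : ℝ → ℝ, ContinuousOn V (Set.Ici 0) ∧ (∀ φ ≥ 0, 0 < V φ) ∧
      ∀ φ > 0, stacyKernel x α c φ = φ ^ ((n:ℝ) + if c = 0 then -1 else 0) * V φ := by
  have : Nonempty (Fin n) := ⟨⟨0, by omega⟩⟩
  have hn' : (0:ℝ) < n := by exact_mod_cast (by omega : 0 < n)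
  set S := ∑ i, x i ^ α with hSdef
  have hS : 0 < S :=
    Finset.sum_pos (fun i _ => Real.rpow_pos_of_pos (hx i) _) Finset.univ_nonempty
  obtain ⟨G, hGc, hGp, hG⟩ : ∃ G : ℝ → ℝ, ContinuousOn G (Set.Ici 0) ∧ (∀ φ ≥ 0, 0 < G φ) ∧
      ∀ φ > 0, Real.Gamma (n * φ + c) = φ ^ (if c = 0 then -1 else 0 : ℝ) * G φ := by
    by_cases h0 : c = 0
    · subst h0
      refine ⟨fun φ => Real.Gamma (n * φ + 1) / n, ?_, ?_, ?_⟩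
      · refine ContinuousOn.div_const (continuousOn_Gamma_pos.comp (by fun_prop) ?_) _
        intro φ hφ
        have : (0:ℝ) ≤ φ := hφ
        simp only [Set.mem_Ioi]; positivity
      · intro φ hφ
        have := Real.Gamma_pos_of_pos (show 0 < n * φ + 1 by positivity)
        positivity
      · intro φ hφ
        simp only [if_true, add_zero]
        rw [Real.Gamma_add_one (by positivity), Real.rpow_neg_one]
        field_simp
    · have hc' : 0 < c := lt_of_le_of_ne hc (Ne.symm h0)
      refine ⟨fun φ => Real.Gamma (n * φ + c), ?_, ?_, ?_⟩
      · refine continuousOn_Gamma_pos.comp (by fun_prop) ?_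
        intro φ hφ
        have : (0:ℝ) ≤ φ := hφ
        simp only [Set.mem_Ioi]; positivity
      · intro φ hφ
        exact Real.Gamma_pos_of_pos (by positivity)
      · intro φ hφ
        simp [h0]
  refine ⟨fun φ => (∏ i, x i ^ (α * φ - 1)) * S ^ (-(n * φ + c)) * G φ /
    Real.Gamma (φ + 1) ^ n, ?_, ?_, ?_⟩
  · refine ContinuousOn.div ?_ ?_ ?_
    · refine ContinuousOn.mul (ContinuousOn.mul ?_ ?_) hGc
      · refine continuousOn_finsetProd _ fun i _ => ?_
        exact ContinuousOn.rpow continuousOn_const (by fun_prop) fun _ _ => Or.inl (hx i).ne'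
      · exact ContinuousOn.rpow continuousOn_const (by fun_prop) fun _ _ => Or.inl hS.ne'
    · refine ContinuousOn.pow (continuousOn_Gamma_pos.comp (by fun_prop) ?_) _
      intro φ hφ
      have : (0:ℝ) ≤ φ := hφ
      simp only [Set.mem_Ioi]; positivity
    · intro φ hφ
      have : (0:ℝ) ≤ φ := hφ
      exact pow_ne_zero _ (Real.Gamma_pos_of_pos (by positivity)).ne'
  · intro φ hφ
    have hP : 0 < ∏ i, x i ^ (α * φ - 1) :=
      Finset.prod_pos fun i _ => Real.rpow_pos_of_pos (hx i) _
    have := Real.Gamma_pos_of_pos (show 0 < φ + 1 by positivity)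
    have := hGp φ hφ
    positivity
  · intro φ hφ
    have h1 := Real.Gamma_pos_of_pos hφ
    simp only [stacyKernel]
    rw [← hSdef, hG φ hφ, Real.Gamma_add_one hφ.ne', Real.rpow_add hφ, Real.rpow_natCast, mul_pow]
    field_simp

/-! ### Integrability in `φ` -/

lemma eventually_le_of_limsup {l : Filter ℝ} {f : ℝ → ℝ}
    (h : Filter.limsup (fun t => ENNReal.ofReal (f t)) l < ⊤) :
    ∃ M > 0, ∀ᶠ t in l, f t ≤ M := by
  obtain ⟨M, hM, hM'⟩ := ENNReal.lt_iff_exists_nnreal_btwn.1 h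
  refine ⟨M + 1, by positivity, ?_⟩
  filter_upwards [eventually_lt_of_limsup_lt hM] with t ht
  have := (ENNReal.ofReal_le_iff_le_toReal (by simp)).1 ht.le
  simp at this
  linarith

lemma stacyKernel_continuousOn {n : ℕ} (hn : 2 ≤ n) {x : Fin n → ℝ} (hx : ∀ i, 0 < x i)
    (α : ℝ) {c : ℝ} (hc : 0 ≤ c) : ContinuousOn (stacyKernel x α c) (Set.Ioi 0) := by
  obtain ⟨V, hVc, -, hV⟩ := stacyKernel_zero hn hx α hc
  refine ContinuousOn.congr (ContinuousOn.mul ?_ (hVc.mono Set.Ioi_subset_Ici_self)) hV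
  exact ContinuousOn.rpow continuousOn_id continuousOn_const
    fun φ hφ => Or.inl (ne_of_gt hφ)

/-- Sufficiency in the variable `φ`: near `0` the integrand is `O(φ^(r₀ + n - 1))` or
`O(φ^(r₀ + n))`, and at infinity it decays exponentially. -/
lemma integrableOn_marginal {n : ℕ} (hn : 2 ≤ n) {x : Fin n → ℝ} (hx : ∀ i, 0 < x i)
    (hxne : ∃ i j, x i ≠ x j) {α c : ℝ} (hα : 0 < α) (hc : 0 ≤ c) {p : ℝ → ℝ}
    (hpc : ContinuousOn p (Set.Ioi 0)) (hp0 : ∀ t > 0, 0 < p t) {r₀ rinf : ℝ}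
    (h0 : Filter.limsup (fun t => ENNReal.ofReal (p t / t ^ r₀)) (𝓝[>] (0:ℝ)) < ⊤)
    (hinf : Filter.limsup (fun t => ENNReal.ofReal (p t / t ^ rinf)) Filter.atTop < ⊤)
    (hexp : -1 < r₀ + n + if c = 0 then -1 else 0) (r : ℕ) :
    IntegrableOn (fun φ => φ ^ r * (p φ * stacyKernel x α c φ)) (Set.Ioi 0) := by
  set f : ℝ → ℝ := fun φ => φ ^ r * (p φ * stacyKernel x α c φ) with hf
  set e : ℝ := if c = 0 then -1 else 0 with he
  have hfc : ContinuousOn f (Set.Ioi 0) :=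
    (continuous_pow r).continuousOn.mul (hpc.mul (stacyKernel_continuousOn hn hx α hc))
  have hf0 : ∀ φ > 0, 0 < f φ := fun φ hφ =>
    mul_pos (pow_pos hφ r) (mul_pos (hp0 φ hφ) (stacyKernel_pos hn hx α hφ hc))
  obtain ⟨M₀, hM₀, hev0⟩ := eventually_le_of_limsup h0
  obtain ⟨M₁, hM₁, hev1⟩ := eventually_le_of_limsup hinf
  obtain ⟨δ', hδ', hδ'2⟩ := (mem_nhdsGT_iff_exists_Ioo_subset).1 hev0
  obtain ⟨B', hB'⟩ := eventually_atTop.1 hev1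
  set δ := min δ' 1
  have hδ : 0 < δ := lt_min hδ' one_pos
  set B := max B' 3
  have hnear : IntegrableOn f (Set.Ioo 0 δ) := by
    obtain ⟨V, hVc, -, hV⟩ := stacyKernel_zero hn hx α hc
    obtain ⟨K, hK⟩ := (isCompact_Icc (a := (0:ℝ)) (b := 1)).exists_bound_of_continuousOn
      (hVc.mono Set.Icc_subset_Ici_self)
    have hint : IntegrableOn (fun φ : ℝ => (M₀ * K) * φ ^ (r₀ + n + e)) (Set.Ioo 0 δ) :=
      Integrable.const_mul ((intervalIntegral.integrableOn_Ioo_rpow_iff hδ).2 hexp) _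
    refine Integrable.mono' hint
      ((hfc.mono Set.Ioo_subset_Ioi_self).aestronglyMeasurable measurableSet_Ioo) ?_
    filter_upwards [ae_restrict_mem measurableSet_Ioo] with φ hφ
    have hφ0 : 0 < φ := hφ.1
    have hφ1 : φ ≤ 1 := hφ.2.le.trans (min_le_right _ _)
    rw [Real.norm_of_nonneg (hf0 φ hφ0).le]
    have h1 : p φ ≤ M₀ * φ ^ r₀ :=
      (div_le_iff₀ (Real.rpow_pos_of_pos hφ0 _)).1
        (hδ'2 ⟨hφ.1, hφ.2.trans_le (min_le_left _ _)⟩)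
    have h2 : V φ ≤ K := (le_abs_self _).trans (hK φ ⟨hφ0.le, hφ1⟩)
    have h3 : φ ^ r ≤ 1 := pow_le_one₀ hφ0.le hφ1
    have h4 : 0 < p φ * stacyKernel x α c φ :=
      mul_pos (hp0 φ hφ0) (stacyKernel_pos hn hx α hφ0 hc)
    calc f φ ≤ 1 * (p φ * stacyKernel x α c φ) := by
          simp only [hf]; gcongr
      _ = p φ * (φ ^ ((n:ℝ) + e) * V φ) := by rw [one_mul, hV φ hφ0]
      _ ≤ p φ * (φ ^ ((n:ℝ) + e) * K) := by
          have := hp0 φ hφ0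
          gcongr
      _ ≤ (M₀ * φ ^ r₀) * (φ ^ ((n:ℝ) + e) * K) := by
          have : 0 ≤ K := (norm_nonneg _).trans (hK φ ⟨hφ0.le, hφ1⟩)
          gcongr
      _ = _ := by rw [add_assoc, Real.rpow_add hφ0 r₀]; ring
  have hmid : IntegrableOn f (Set.Icc δ B) :=
    (hfc.mono fun φ hφ => hδ.trans_le hφ.1).integrableOn_Icc
  have htail : IntegrableOn f (Set.Ioi B) := by
    obtain ⟨C, hC, N, b, hb, hN⟩ := stacyKernel_tail hn hx hxne hα hc
    obtain ⟨R, hR⟩ := exists_nat_ge rinf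
    have hint : IntegrableOn
        (fun φ : ℝ => (M₁ * C) * (φ ^ ((r + R + N : ℕ) : ℝ) * Real.exp (-b * φ ^ (1:ℝ))))
        (Set.Ioi B) := by
      refine IntegrableOn.mono_set (Integrable.const_mul
        (integrableOn_rpow_mul_exp_neg_mul_rpow ?_ one_pos hb) _)
        (Set.Ioi_subset_Ioi (le_trans (by norm_num : (0:ℝ) ≤ 3) (le_max_right _ _)))
      have : (0:ℝ) ≤ ((r + R + N : ℕ) : ℝ) := Nat.cast_nonneg _
      linarith
    have h3B : (3:ℝ) ≤ B := le_max_right _ _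
    refine Integrable.mono' hint ((hfc.mono (Set.Ioi_subset_Ioi (by linarith))).aestronglyMeasurable
      measurableSet_Ioi) ?_
    filter_upwards [ae_restrict_mem measurableSet_Ioi] with φ hφ
    have hBφ : B < φ := hφ
    have hφ3 : 3 ≤ φ := by linarith
    have hφ0 : 0 < φ := by linarith
    rw [Real.norm_of_nonneg (hf0 φ hφ0).le]
    have h1 : p φ ≤ M₁ * φ ^ rinf :=
      (div_le_iff₀ (Real.rpow_pos_of_pos hφ0 _)).1 (hB' φ ((le_max_left _ _).trans hBφ.le))
    have h2 : φ ^ rinf ≤ φ ^ R := by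
      rw [← Real.rpow_natCast]
      exact Real.rpow_le_rpow_of_exponent_le (by linarith) hR
    have hk := stacyKernel_pos hn hx α hφ0 hc
    calc f φ ≤ φ ^ r * ((M₁ * φ ^ R) * (C * φ ^ N * Real.exp (-b * φ))) := by
          simp only [hf]
          have := hN φ hφ3
          have h5 : p φ ≤ M₁ * φ ^ R := h1.trans (by gcongr)
          gcongr
      _ = _ := by rw [Real.rpow_natCast, Real.rpow_one, pow_add, pow_add]; ring
  refine ((hnear.union hmid).union htail).mono_set fun φ hφ => ?_
  have : 0 < φ := hφ
  rcases lt_or_ge φ δ with h | h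
  · exact Or.inl (Or.inl ⟨this, h⟩)
  · rcases le_or_gt φ B with h' | h'
    · exact Or.inl (Or.inr ⟨h, h'⟩)
    · exact Or.inr h'

/-- Necessity in the variable `φ`: near `0` the integrand is at least a constant times
`φ^(r₀ + n - 1)` or `φ^(r₀ + n)`. -/
lemma exponent_of_integrableOn {n : ℕ} (hn : 2 ≤ n) {x : Fin n → ℝ} (hx : ∀ i, 0 < x i)
    {α c : ℝ} (hc : 0 ≤ c) {p : ℝ → ℝ} (hp0 : ∀ t > 0, 0 < p t) {r₀ : ℝ}
    (h0 : Filter.limsup (fun t => ENNReal.ofReal (t ^ r₀ / p t)) (𝓝[>] (0:ℝ)) < ⊤)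
    (hint : IntegrableOn (fun φ => p φ * stacyKernel x α c φ) (Set.Ioi 0)) :
    -1 < r₀ + n + if c = 0 then -1 else 0 := by
  set e : ℝ := if c = 0 then -1 else 0 with he
  obtain ⟨M₀, hM₀, hev0⟩ := eventually_le_of_limsup h0
  obtain ⟨δ', hδ', hδ'2⟩ := (mem_nhdsGT_iff_exists_Ioo_subset).1 hev0
  set δ := min δ' 1
  have hδ : 0 < δ := lt_min hδ' one_pos
  obtain ⟨V, hVc, hVp, hV⟩ := stacyKernel_zero hn hx α hc
  obtain ⟨K, hK⟩ := (isCompact_Icc (a := (0:ℝ)) (b := 1)).exists_bound_of_continuousOn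
    ((hVc.inv₀ fun φ hφ => (hVp φ hφ).ne').mono Set.Icc_subset_Ici_self)
  rw [← intervalIntegral.integrableOn_Ioo_rpow_iff hδ]
  have hint' : IntegrableOn (fun φ => (M₀ * K) * (p φ * stacyKernel x α c φ)) (Set.Ioo 0 δ) :=
    (hint.mono_set Set.Ioo_subset_Ioi_self).const_mul _
  refine Integrable.mono' hint' (by fun_prop) ?_
  filter_upwards [ae_restrict_mem measurableSet_Ioo] with φ hφ
  have hφ0 : 0 < φ := hφ.1
  have hφ1 : φ ≤ 1 := hφ.2.le.trans (min_le_right _ _)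
  rw [Real.norm_of_nonneg (Real.rpow_pos_of_pos hφ0 _).le]
  have h1 : φ ^ r₀ ≤ M₀ * p φ :=
    (div_le_iff₀ (hp0 φ hφ0)).1 (hδ'2 ⟨hφ.1, hφ.2.trans_le (min_le_left _ _)⟩)
  have hVφ := hVp φ hφ0.le
  have h2 : 1 ≤ K * V φ := by
    have : (V φ)⁻¹ ≤ K := (le_abs_self _).trans (hK φ ⟨hφ0.le, hφ1⟩)
    calc (1:ℝ) = (V φ)⁻¹ * V φ := by field_simp
      _ ≤ _ := by gcongr
  calc φ ^ (r₀ + n + e) = φ ^ r₀ * φ ^ ((n:ℝ) + e) * 1 := by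
        rw [add_assoc, Real.rpow_add hφ0 r₀, mul_one]
    _ ≤ (M₀ * p φ) * φ ^ ((n:ℝ) + e) * (K * V φ) := by
        have := hp0 φ hφ0
        gcongr
    _ = _ := by rw [hV φ hφ0]; ring

/-! ### Integration over `μ` -/

/-- The Gamma integral over `μ`, in terms of `c = (k + 1) / α`. -/
lemma lintegral_mu {n : ℕ} {α S k A φ : ℝ} (hα : 0 < α) (hS : 0 < S) (hn : 0 < n) (hA : 0 ≤ A)
    (hk : -1 ≤ k) (hφ : 0 < φ) :
    ∫⁻ μ in Set.Ioi (0:ℝ), ENNReal.ofReal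
      (A * (μ ^ k * μ ^ ((n:ℝ) * α * φ) * Real.exp (-(μ ^ α * S)))) =
    ENNReal.ofReal (A * (1 / α * S ^ (-(n * φ + (k + 1) / α)) *
      Real.Gamma (n * φ + (k + 1) / α))) := by
  have hn' : (0:ℝ) < n := by exact_mod_cast hn
  have hpos : 0 < (n:ℝ) * α * φ := by positivity
  have hq : -1 < k + n * α * φ := by linarith
  have hcong : ∀ μ ∈ Set.Ioi (0:ℝ),
      A * (μ ^ k * μ ^ ((n:ℝ) * α * φ) * Real.exp (-(μ ^ α * S))) =
      A * (μ ^ (k + n * α * φ) * Real.exp (-S * μ ^ α)) := by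
    intro μ hμ
    rw [Real.rpow_add hμ]
    ring_nf
  rw [setLIntegral_congr_fun measurableSet_Ioi (fun μ hμ => by rw [hcong μ hμ]),
    ← ofReal_integral_eq_lintegral_ofReal]
  · rw [integral_const_mul, integral_rpow_mul_exp_neg_mul_rpow hα hq hS]
    have : (k + n * α * φ + 1) / α = n * φ + (k + 1) / α := by field_simp; ring
    rw [neg_div, this]
    ring_nf
  · exact (integrableOn_rpow_mul_exp_neg_mul_rpow hq hα hS).const_mul _
  · filter_upwards [ae_restrict_mem measurableSet_Ioi] with μ hμ
    have : (0:ℝ) < μ := hμ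
    simp only [Pi.zero_apply]
    positivity

/-- The integral over `μ` diverges at `0` when the exponent of `μ` is at most `-1`. -/
lemma lintegral_mu_eq_top {n : ℕ} {α S k A φ : ℝ} (hα : 0 < α) (hS : 0 < S) (hA : 0 < A)
    (hk : k + n * α * φ ≤ -1) :
    ∫⁻ μ in Set.Ioi (0:ℝ), ENNReal.ofReal
      (A * (μ ^ k * μ ^ ((n:ℝ) * α * φ) * Real.exp (-(μ ^ α * S)))) = ⊤ := by
  by_contra hne
  have hle : ∫⁻ μ in Set.Ioo (0:ℝ) 1, ENNReal.ofReal
      ((A * Real.exp (-S)) * μ ^ (k + n * α * φ)) ≠ ⊤ := by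
    refine ne_top_of_le_ne_top hne ((setLIntegral_mono' measurableSet_Ioo fun μ hμ => ?_).trans
      (lintegral_mono_set Set.Ioo_subset_Ioi_self))
    refine ENNReal.ofReal_le_ofReal ?_
    have hμ0 : 0 < μ := hμ.1
    have h1 : μ ^ α * S ≤ S := by
      have := Real.rpow_le_one hμ0.le hμ.2.le hα.le
      nlinarith
    rw [Real.rpow_add hμ0]
    calc A * Real.exp (-S) * (μ ^ k * μ ^ ((n:ℝ) * α * φ))
        = A * (μ ^ k * μ ^ ((n:ℝ) * α * φ) * Real.exp (-S)) := by ring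
      _ ≤ _ := by gcongr
  rw [lintegral_ofReal_ne_top_iff_integrable (by fun_prop)] at hle
  · have hAS : A * Real.exp (-S) ≠ 0 := by positivity
    have h2 := hle.const_mul (A * Real.exp (-S))⁻¹
    simp only [inv_mul_cancel_left₀ hAS] at h2
    have := (intervalIntegral.integrableOn_Ioo_rpow_iff one_pos).1 h2
    linarith
  · filter_upwards [ae_restrict_mem measurableSet_Ioo] with μ hμ
    have : (0:ℝ) < μ := hμ.1
    simp only [Pi.zero_apply]
    positivity

/-! ### Propriety of the posterior -/

/-- (Theorem 2.3 of the paper.) In the Stacy model with `α > 0` known,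
if `π_μ(μ) ∝ μ^k` on `(0,∞)`, `π_φ(φ) ∝ φ^{r₀}` as `φ → 0⁺` and `π_φ(φ) ∝ φ^{r_∞}` as
`φ → ∞`, then the posterior for `(φ,μ)` is proper iff `k = -1` with `n > -r₀`, or
`k > -1` with `n > -r₀ - 1`; and in the proper case all posterior moments of `φ` and `μ`
are finite. -/
theorem stacy_alpha_known_posterior_proper_iff
    (n : ℕ) (hn : 2 ≤ n) (x : Fin n → ℝ) (hx : ∀ i, 0 < x i) (hxne : ∃ i j, x i ≠ x j)
    (α : ℝ) (hα : 0 < α)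
    (πμ πφ : ℝ → ℝ)
    (hπμc : ContinuousOn πμ (Set.Ioi 0)) (hπφc : ContinuousOn πφ (Set.Ioi 0))
    (hπμ0 : ∀ t > 0, 0 < πμ t) (hπφ0 : ∀ t > 0, 0 < πφ t)
    (k r₀ rinf : ℝ)
    (hμk₁ : ∃ M > 0, ∀ t > 0, πμ t ≤ M * t ^ k)
    (hμk₂ : ∃ c > 0, ∀ t > 0, c * t ^ k ≤ πμ t)
    (hφ0₁ : Filter.limsup (fun t => ENNReal.ofReal (πφ t / t ^ r₀)) (𝓝[>] (0:ℝ)) < ⊤)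
    (hφ0₂ : Filter.limsup (fun t => ENNReal.ofReal (t ^ r₀ / πφ t)) (𝓝[>] (0:ℝ)) < ⊤)
    (hφinf₁ : Filter.limsup (fun t => ENNReal.ofReal (πφ t / t ^ rinf)) Filter.atTop < ⊤)
    (hφinf₂ : Filter.limsup (fun t => ENNReal.ofReal (t ^ rinf / πφ t)) Filter.atTop < ⊤) :
    ((∫⁻ φ in Set.Ioi (0:ℝ), ∫⁻ μ in Set.Ioi (0:ℝ),
        ENNReal.ofReal (πφ φ * πμ μ / Real.Gamma φ ^ n *
          (∏ i, x i ^ (α * φ - 1)) * μ ^ ((n : ℝ) * α * φ) *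
          Real.exp (-(μ ^ α * ∑ i, x i ^ α)))) < ⊤ ↔
      ((k = -1 ∧ -r₀ < (n : ℝ)) ∨ (-1 < k ∧ -r₀ - 1 < (n : ℝ)))) ∧
    (((k = -1 ∧ -r₀ < (n : ℝ)) ∨ (-1 < k ∧ -r₀ - 1 < (n : ℝ))) →
      ∀ r s : ℕ,
        (∫⁻ φ in Set.Ioi (0:ℝ), ∫⁻ μ in Set.Ioi (0:ℝ),
          ENNReal.ofReal (φ ^ r * μ ^ s * (πφ φ * πμ μ / Real.Gamma φ ^ n *
            (∏ i, x i ^ (α * φ - 1)) * μ ^ ((n : ℝ) * α * φ) *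
            Real.exp (-(μ ^ α * ∑ i, x i ^ α))))) < ⊤) := by
  have : Nonempty (Fin n) := ⟨⟨0, by omega⟩⟩
  have hn0 : 0 < n := by omega
  have hn' : (0:ℝ) < n := by exact_mod_cast hn0
  set S := ∑ i, x i ^ α with hSdef
  have hS : 0 < S :=
    Finset.sum_pos (fun i _ => Real.rpow_pos_of_pos (hx i) _) Finset.univ_nonempty
  have hP : ∀ φ : ℝ, 0 < ∏ i, x i ^ (α * φ - 1) := fun φ =>
    Finset.prod_pos fun i _ => Real.rpow_pos_of_pos (hx i) _
  obtain ⟨M, hM, hMle⟩ := hμk₁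
  obtain ⟨m, hm, hmle⟩ := hμk₂
  have hmoments : ((k = -1 ∧ -r₀ < (n : ℝ)) ∨ (-1 < k ∧ -r₀ - 1 < (n : ℝ))) →
      ∀ r s : ℕ,
        (∫⁻ φ in Set.Ioi (0:ℝ), ∫⁻ μ in Set.Ioi (0:ℝ),
          ENNReal.ofReal (φ ^ r * μ ^ s * (πφ φ * πμ μ / Real.Gamma φ ^ n *
            (∏ i, x i ^ (α * φ - 1)) * μ ^ ((n : ℝ) * α * φ) *
            Real.exp (-(μ ^ α * S))))) < ⊤ := by
    intro hcond r s
    have hs0 : (0:ℝ) ≤ s := s.cast_nonneg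
    have hk : -1 ≤ k := by rcases hcond with h | h <;> linarith [h.1]
    have hks : -1 ≤ k + s := by linarith
    set c := (k + s + 1) / α with hcdef
    have hc : 0 ≤ c := div_nonneg (by linarith) hα.le
    have hexp : -1 < r₀ + n + if c = 0 then -1 else 0 := by
      split_ifs with h
      · have : k + s + 1 = 0 := by
          rcases div_eq_zero_iff.1 h with h | h
          · exact h
          · exact absurd h hα.ne'
        rcases hcond with h | h <;> linarith [h.1, h.2]
      · rcases hcond with h | h <;> linarith [h.1, h.2]
    have hI := integrableOn_marginal hn hx hxne hα hc hπφc hπφ0 hφ0₁ hφinf₁ hexp r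
    have hI' := (hasFiniteIntegral_iff_ofReal ?_).1 (hI.const_mul (M / α)).2
    · refine lt_of_le_of_lt (setLIntegral_mono' measurableSet_Ioi fun φ hφ => ?_) hI'
      have hφ0 : 0 < φ := hφ
      have hΓ := Real.Gamma_pos_of_pos hφ0
      have hπ := hπφ0 φ hφ0
      have hPφ := hP φ
      calc _ ≤ ∫⁻ μ in Set.Ioi (0:ℝ), ENNReal.ofReal
            ((M * (φ ^ r * (πφ φ * (∏ i, x i ^ (α * φ - 1)) / Real.Gamma φ ^ n))) *
              (μ ^ (k + s) * μ ^ ((n:ℝ) * α * φ) * Real.exp (-(μ ^ α * S)))) := by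
            refine setLIntegral_mono' measurableSet_Ioi fun μ hμ =>
              ENNReal.ofReal_le_ofReal ?_
            have hμ0 : 0 < μ := hμ
            calc _ = (φ ^ r * (πφ φ * (∏ i, x i ^ (α * φ - 1)) / Real.Gamma φ ^ n)) *
                  (μ ^ s * μ ^ ((n:ℝ) * α * φ) * Real.exp (-(μ ^ α * S))) * πμ μ := by ring
              _ ≤ (φ ^ r * (πφ φ * (∏ i, x i ^ (α * φ - 1)) / Real.Gamma φ ^ n)) *
                  (μ ^ s * μ ^ ((n:ℝ) * α * φ) * Real.exp (-(μ ^ α * S))) * (M * μ ^ k) := by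
                  have := hMle μ hμ0
                  gcongr
              _ = _ := by rw [Real.rpow_add hμ0, Real.rpow_natCast]; ring
        _ = _ := by
            rw [lintegral_mu hα hS hn0 (by positivity) hks hφ0]
            congr 1
            simp only [stacyKernel, ← hSdef, ← hcdef]
            ring
    · filter_upwards [ae_restrict_mem measurableSet_Ioi] with φ hφ
      have hφ0 : 0 < φ := hφ
      have := stacyKernel_pos hn hx α hφ0 hc
      have := hπφ0 φ hφ0
      simp only [Pi.zero_apply]
      positivity
  refine ⟨⟨fun hfin => ?_, fun hcond => ?_⟩, hmoments⟩
  · -- lower bound for the inner integral coming from `m μ^k ≤ π_μ(μ)`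
    have hlow : ∀ φ > 0, ∫⁻ μ in Set.Ioi (0:ℝ), ENNReal.ofReal
          ((m * (πφ φ * (∏ i, x i ^ (α * φ - 1)) / Real.Gamma φ ^ n)) *
            (μ ^ k * μ ^ ((n:ℝ) * α * φ) * Real.exp (-(μ ^ α * S)))) ≤
        ∫⁻ μ in Set.Ioi (0:ℝ),
        ENNReal.ofReal (πφ φ * πμ μ / Real.Gamma φ ^ n *
          (∏ i, x i ^ (α * φ - 1)) * μ ^ ((n : ℝ) * α * φ) *
          Real.exp (-(μ ^ α * S))) := by
      intro φ hφ0
      refine setLIntegral_mono' measurableSet_Ioi fun μ hμ => ENNReal.ofReal_le_ofReal ?_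
      have hμ0 : 0 < μ := hμ
      have hΓ := Real.Gamma_pos_of_pos hφ0
      have hπ := hπφ0 φ hφ0
      have hPφ := hP φ
      calc _ = (πφ φ * (∏ i, x i ^ (α * φ - 1)) / Real.Gamma φ ^ n) *
            (μ ^ ((n:ℝ) * α * φ) * Real.exp (-(μ ^ α * S))) * (m * μ ^ k) := by ring
        _ ≤ (πφ φ * (∏ i, x i ^ (α * φ - 1)) / Real.Gamma φ ^ n) *
            (μ ^ ((n:ℝ) * α * φ) * Real.exp (-(μ ^ α * S))) * πμ μ := by
            have := hmle μ hμ0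
            gcongr
        _ = _ := by ring
    have hA : ∀ φ > 0, 0 < m * (πφ φ * (∏ i, x i ^ (α * φ - 1)) / Real.Gamma φ ^ n) := by
      intro φ hφ0
      have hΓ := Real.Gamma_pos_of_pos hφ0
      have hπ := hπφ0 φ hφ0
      have hPφ := hP φ
      positivity
    have hk : -1 ≤ k := by
      by_contra! hk
      -- the inner integral is infinite for every `φ` in the interval `(0, d)`
      set d := (-1 - k) / (n * α) with hd
      have hd0 : 0 < d := div_pos (by linarith) (by positivity)
      refine absurd hfin (not_lt.2 ?_)
      calc (⊤ : ENNReal) = ∫⁻ φ in Set.Ioo (0:ℝ) d, ⊤ := by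
            rw [setLIntegral_const, Real.volume_Ioo, ENNReal.top_mul]
            simpa using hd0
        _ ≤ _ := (setLIntegral_mono' measurableSet_Ioo fun φ hφ => ?_).trans
            (lintegral_mono_set Set.Ioo_subset_Ioi_self)
      refine le_trans (le_of_eq ?_) (hlow φ hφ.1)
      refine (lintegral_mu_eq_top hα hS (hA φ hφ.1) ?_).symm
      have := (lt_div_iff₀ (by positivity)).1 hφ.2
      nlinarith
    set c := (k + 1) / α with hcdef
    have hc : 0 ≤ c := div_nonneg (by linarith) hα.le
    have hI : IntegrableOn (fun φ => m / α * (πφ φ * stacyKernel x α c φ)) (Set.Ioi 0) := by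
      refine ⟨(continuousOn_const.mul
        (hπφc.mul (stacyKernel_continuousOn hn hx α hc))).aestronglyMeasurable measurableSet_Ioi, ?_⟩
      refine (hasFiniteIntegral_iff_ofReal ?_).2 ?_
      · filter_upwards [ae_restrict_mem measurableSet_Ioi] with φ hφ
        have hφ0 : 0 < φ := hφ
        have := stacyKernel_pos hn hx α hφ0 hc
        have := hπφ0 φ hφ0
        simp only [Pi.zero_apply]
        positivity
      · refine lt_of_le_of_lt (setLIntegral_mono' measurableSet_Ioi fun φ hφ => ?_) hfin
        refine le_trans (le_of_eq ?_) (hlow φ hφ)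
        rw [lintegral_mu hα hS hn0 (hA φ hφ).le hk hφ]
        congr 1
        simp only [stacyKernel, ← hSdef, ← hcdef]
        ring
    have hmα : m / α ≠ 0 := by positivity
    have hI' : IntegrableOn (fun φ => πφ φ * stacyKernel x α c φ) (Set.Ioi 0) := by
      have := Integrable.const_mul hI (m / α)⁻¹
      simp only [inv_mul_cancel_left₀ hmα] at this
      exact this
    have hexp := exponent_of_integrableOn hn hx hc hπφ0 hφ0₂ hI'
    rcases hk.eq_or_lt with h | h
    · left
      have h0 : c = 0 := by rw [hcdef, ← h]; simp
      rw [if_pos h0] at hexp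
      exact ⟨h.symm, by linarith⟩
    · right
      have h0 : c ≠ 0 := (div_pos (by linarith) hα).ne'
      rw [if_neg h0] at hexp
      exact ⟨h, by linarith⟩
  · simpa using hmoments hcond 0 0
end

section
/- Fix φ > 0, and let π_μ, π_α : (0,∞) → (0,∞) be continuous with π_μ(μ) ≲ μ^{−1} on (0,∞), π_α(α) ≲ α^{q₀} as α → 0⁺ with n > −q₀, and π_α(α) ≲ α^{q_∞} as α → ∞ for some q_∞ ∈ ℝ. Then ∫_0^∞ ∫_0^∞ π_α(α) π_μ(μ) α^n (∏_{i=1}^n x_i^{αφ−1}) μ^{nαφ} exp(−μ^α Σ_{i=1}^n x_i^α) dμ dα < ∞; i.e., the posterior for (μ,α) in the Stacy model with φ known is proper. -/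
/-! After bounding `πμ μ ≤ M μ⁻¹`, the substitution `u = μ ^ α` evaluates the inner integral as a
Gamma integral, `α⁻¹ Γ(nφ) S ^ (-nφ)` with `S = ∑ xᵢ ^ α`. Let `m = max xᵢ`. Since `S ≥ m ^ α`, the
factor `∏ xᵢ ^ (αφ - 1) * S ^ (-nφ)` is at most `(∏ xᵢ)⁻¹ * exp (-b α)` with
`b = φ ∑ (log m - log xᵢ)` (`prod_mul_rpow_le`), and `b > 0` precisely because the data are not all
equal. The growth conditions on `πα`, with continuity on the compact range in between, give
`πα α ≤ C (α ^ q₀ + α ^ (q₀ + p))` for some `p ≥ 0` (`exists_prior_bound`). What remains is a sum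
of two Gamma integrals in `α`, with exponents `q₀ + n - 1` and `q₀ + p + n - 1`, both `> -1`. -/

open MeasureTheory Real Filter Topology


/-- The global form of the two growth conditions on `f`. Raising the exponent at infinity to
at least `q₀` keeps the second term integrable near `0` whenever the first one is. -/
lemma exists_prior_bound (f : ℝ → ℝ) (hc : ContinuousOn f (Set.Ioi 0)) (q₀ qinf : ℝ)
    (h0 : Filter.limsup (fun t => ENNReal.ofReal (f t / t ^ q₀)) (𝓝[>] (0:ℝ)) < ⊤)
    (hinf : Filter.limsup (fun t => ENNReal.ofReal (f t / t ^ qinf)) Filter.atTop < ⊤) :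
    ∃ C > 0, ∀ t > 0, f t ≤ C * (t ^ q₀ + t ^ (q₀ + |qinf - q₀|)) := by
  have key : ∀ (l : Filter ℝ) (q : ℝ),
      Filter.limsup (fun t => ENNReal.ofReal (f t / t ^ q)) l < ⊤ →
      ∃ C > 0, ∀ᶠ t in l, f t / t ^ q ≤ C := by
    intro l q h
    obtain ⟨c, hc1, hc2⟩ := exists_between h
    have := Filter.eventually_lt_of_limsup_lt hc1
    refine ⟨c.toReal + 1, by positivity, this.mono fun t ht => ?_⟩
    have := (ENNReal.ofReal_le_iff_le_toReal hc2.ne).1 ht.le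
    linarith
  obtain ⟨A, hA, hA'⟩ := key _ _ h0
  obtain ⟨B, hB, hB'⟩ := key _ _ hinf
  obtain ⟨δ, hδ, hδ'⟩ := mem_nhdsGT_iff_exists_Ioo_subset.1 hA'
  obtain ⟨R, hR⟩ := Filter.eventually_atTop.1 hB'
  have hδ0 : 0 < δ := hδ
  have hsub : Set.Icc δ (max R 1) ⊆ Set.Ioi 0 := fun t ht => lt_of_lt_of_le hδ0 ht.1
  have hcont : ContinuousOn (fun t : ℝ => f t / t ^ q₀) (Set.Icc δ (max R 1)) := by
    refine (hc.mono hsub).div (continuousOn_id.rpow_const fun t ht => Or.inl (hsub ht).ne') ?_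
    intro t ht
    exact (rpow_pos_of_pos (hsub ht) _).ne'
  obtain ⟨D, hD⟩ := (isCompact_Icc.image_of_continuousOn hcont).bddAbove
  refine ⟨A + B + |D|, by positivity, fun t ht => ?_⟩
  have e1 : 0 < t ^ q₀ := rpow_pos_of_pos ht _
  have e2 : 0 < t ^ (q₀ + |qinf - q₀|) := rpow_pos_of_pos ht _
  have hDa := abs_nonneg D
  have small : ∀ K, 0 ≤ K → K ≤ A + B + |D| → f t / t ^ q₀ ≤ K →
      f t ≤ (A + B + |D|) * (t ^ q₀ + t ^ (q₀ + |qinf - q₀|)) := by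
    intro K hK0 hK h
    rw [div_le_iff₀ e1] at h
    exact h.trans (mul_le_mul hK (by linarith) e1.le (by linarith))
  by_cases h1 : t < δ
  · exact small A hA.le (by linarith) (hδ' ⟨ht, h1⟩)
  by_cases h2 : t ≤ max R 1
  · exact small |D| hDa (by linarith)
      ((hD (Set.mem_image_of_mem _ ⟨not_lt.1 h1, h2⟩)).trans (le_abs_self D))
  · push Not at h2
    have h3 := hR t ((le_max_left _ _).trans h2.le)
    have ht1 : 1 ≤ t := (le_max_right _ _).trans h2.le
    rw [div_le_iff₀ (rpow_pos_of_pos ht _)] at h3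
    have h4 : t ^ qinf ≤ t ^ (q₀ + |qinf - q₀|) :=
      rpow_le_rpow_of_exponent_le ht1 (by linarith [le_abs_self (qinf - q₀)])
    exact h3.trans (mul_le_mul (by linarith) (by linarith) (rpow_pos_of_pos ht _).le (by linarith))

/-- The integrability is read off from the nonzero value of the Bochner integral. -/
lemma lintegral_rpow_mul_exp {p q b : ℝ} (hp : 0 < p) (hq : -1 < q) (hb : 0 < b) :
    ∫⁻ t in Set.Ioi (0:ℝ), ENNReal.ofReal (t ^ q * exp (-b * t ^ p)) =
      ENNReal.ofReal (b ^ (-(q + 1) / p) * (1 / p) * Gamma ((q + 1) / p)) := by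
  have h := integral_rpow_mul_exp_neg_mul_rpow hp hq hb
  have hpos : 0 < b ^ (-(q + 1) / p) * (1 / p) * Gamma ((q + 1) / p) := by
    have : 0 < (q + 1) / p := div_pos (by linarith) hp
    have := Gamma_pos_of_pos this
    have := rpow_pos_of_pos hb (-(q + 1) / p)
    positivity
  rw [← h]
  refine (ofReal_integral_eq_lintegral_ofReal ?_ ?_).symm
  · exact Integrable.of_integral_ne_zero (h.trans_ne hpos.ne')
  · refine (ae_restrict_mem measurableSet_Ioi).mono fun t ht => ?_
    exact mul_nonneg (rpow_nonneg (le_of_lt ht) _) (exp_pos _).le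

/-- The exponential decay in `α`: bounding `∑ xᵢ ^ α` below by its largest term `m ^ α` leaves
`∏ (xᵢ / m) ^ (α φ)`. -/
lemma prod_mul_rpow_le {n : ℕ} (x : Fin n → ℝ) (hx : ∀ i, 0 < x i) (k : Fin n)
    {φ α : ℝ} (hφ : 0 < φ) :
    (∏ i, x i ^ (α * φ - 1)) * (∑ i, x i ^ α) ^ (-(n * φ)) ≤
      (∏ i, x i)⁻¹ * exp (-(φ * ∑ i, (log (x k) - log (x i))) * α) := by
  have hS : x k ^ α ≤ ∑ i, x i ^ α :=
    Finset.single_le_sum (f := fun i => x i ^ α)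
      (fun i _ => (rpow_pos_of_pos (hx i) _).le) (Finset.mem_univ k)
  have h1 : (∑ i, x i ^ α) ^ (-(n * φ)) ≤ (x k ^ α) ^ (-(n * φ)) :=
    rpow_le_rpow_of_nonpos (rpow_pos_of_pos (hx k) _) hS
      (by have : 0 ≤ (n : ℝ) * φ := by positivity
          linarith)
  have hP : 0 ≤ ∏ i, x i ^ (α * φ - 1) :=
    Finset.prod_nonneg fun i _ => (rpow_pos_of_pos (hx i) _).le
  refine (mul_le_mul_of_nonneg_left h1 hP).trans (le_of_eq ?_)
  have e1 : ∏ i, x i ^ (α * φ - 1) = (∏ i, x i)⁻¹ * exp (∑ i, log (x i) * (α * φ)) := by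
    rw [exp_sum, ← Finset.prod_inv_distrib, ← Finset.prod_mul_distrib]
    refine Finset.prod_congr rfl fun i _ => ?_
    rw [rpow_sub (hx i), rpow_one, rpow_def_of_pos (hx i)]
    ring
  rw [e1, ← rpow_mul (hx k).le, rpow_def_of_pos (hx k), mul_assoc, ← exp_add,
    Finset.sum_sub_distrib, ← Finset.sum_mul]
  simp only [Finset.sum_const, Finset.card_univ, Fintype.card_fin, nsmul_eq_mul]
  ring_nf

/-- (Theorem 2.4 of the paper.) In the Stacy model with `φ > 0` known,
if `π_μ(μ) ≲ μ^{-1}` on `(0,∞)`, `π_α(α) ≲ α^{q₀}` as `α → 0⁺` with `n > -q₀`, and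
`π_α(α) ≲ α^{q_∞}` as `α → ∞`, then the posterior for `(μ,α)` is proper. -/
theorem stacy_phi_known_posterior_proper
    (n : ℕ) (hn : 2 ≤ n) (x : Fin n → ℝ) (hx : ∀ i, 0 < x i) (hxne : ∃ i j, x i ≠ x j)
    (φ : ℝ) (hφ : 0 < φ)
    (πμ πα : ℝ → ℝ)
    (hπμc : ContinuousOn πμ (Set.Ioi 0)) (hπαc : ContinuousOn πα (Set.Ioi 0))
    (hπμ0 : ∀ t > 0, 0 < πμ t) (hπα0 : ∀ t > 0, 0 < πα t)
    (q₀ qinf : ℝ)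
    (hμ : ∃ M > 0, ∀ t > 0, πμ t ≤ M * t ^ (-1 : ℝ))
    (hα0 : Filter.limsup (fun t => ENNReal.ofReal (πα t / t ^ q₀)) (𝓝[>] (0:ℝ)) < ⊤)
    (hq₀ : -q₀ < (n : ℝ))
    (hαinf : Filter.limsup (fun t => ENNReal.ofReal (πα t / t ^ qinf)) Filter.atTop < ⊤) :
    (∫⁻ α in Set.Ioi (0:ℝ), ∫⁻ μ in Set.Ioi (0:ℝ),
      ENNReal.ofReal (πα α * πμ μ * α ^ n *
        (∏ i, x i ^ (α * φ - 1)) * μ ^ ((n : ℝ) * α * φ) *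
        Real.exp (-(μ ^ α * ∑ i, x i ^ α)))) < ⊤ := by
  obtain ⟨M, hM, hM'⟩ := hμ
  obtain ⟨C, hC, hC'⟩ := exists_prior_bound πα hπαc q₀ qinf hα0 hαinf
  have : NeZero n := ⟨by omega⟩
  obtain ⟨k, hk⟩ := Finite.exists_max x
  have hn0 : (0 : ℝ) < n := by positivity
  have hnφ : 0 < (n : ℝ) * φ := by positivity
  set b : ℝ := φ * ∑ i, (log (x k) - log (x i)) with hb
  have hbpos : 0 < b := by
    refine mul_pos hφ (Finset.sum_pos' (fun i _ => ?_) ?_)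
    · exact sub_nonneg.2 (log_le_log (hx i) (hk i))
    · obtain ⟨i, j, hij⟩ := hxne
      have : ∃ i, x i < x k := by
        by_contra! h
        exact hij (((hk i).antisymm (h i)).trans ((hk j).antisymm (h j)).symm)
      obtain ⟨l, hl⟩ := this
      exact ⟨l, Finset.mem_univ _, sub_pos.2 (log_lt_log (hx l) hl)⟩
  have hX : 0 < ∏ i, x i := Finset.prod_pos fun i _ => hx i
  have hG : 0 < Gamma (n * φ) := Gamma_pos_of_pos hnφ
  set p : ℝ := |qinf - q₀| with hp
  have hp0 : 0 ≤ p := abs_nonneg _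
  set K : ℝ := C * M * Gamma (n * φ) * (∏ i, x i)⁻¹ with hK
  have hKpos : 0 < K := by positivity
  have inner : ∀ α ∈ Set.Ioi (0:ℝ), (∫⁻ μ in Set.Ioi (0:ℝ),
      ENNReal.ofReal (πα α * πμ μ * α ^ n *
        (∏ i, x i ^ (α * φ - 1)) * μ ^ ((n : ℝ) * α * φ) *
        Real.exp (-(μ ^ α * ∑ i, x i ^ α)))) ≤
      ENNReal.ofReal K * (ENNReal.ofReal (α ^ (q₀ + n - 1) * exp (-b * α ^ (1:ℝ))) +
        ENNReal.ofReal (α ^ (q₀ + p + n - 1) * exp (-b * α ^ (1:ℝ)))) := by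
    intro α hα
    have hα : 0 < α := hα
    set S := ∑ i, x i ^ α with hS
    have hSpos : 0 < S := Finset.sum_pos (fun i _ => rpow_pos_of_pos (hx i) _) ⟨k, Finset.mem_univ _⟩
    set P := ∏ i, x i ^ (α * φ - 1) with hPdef
    have hP : 0 < P := Finset.prod_pos fun i _ => rpow_pos_of_pos (hx i) _
    have hπ := hπα0 α hα
    have hc : 0 ≤ πα α * α ^ n * P * M := by positivity
    have hq : -1 < (n : ℝ) * α * φ - 1 := by
      have : 0 < (n : ℝ) * α * φ := by positivity
      linarith
    calc _ ≤ ∫⁻ μ in Set.Ioi (0:ℝ), ENNReal.ofReal (πα α * α ^ n * P * M) *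
          ENNReal.ofReal (μ ^ ((n : ℝ) * α * φ - 1) * exp (-S * μ ^ α)) := by
          refine setLIntegral_mono' measurableSet_Ioi fun μ hμ => ?_
          have hμ : 0 < μ := hμ
          rw [← ENNReal.ofReal_mul hc]
          refine ENNReal.ofReal_le_ofReal ?_
          have e : πα α * α ^ n * P * M * (μ ^ ((n : ℝ) * α * φ - 1) * exp (-S * μ ^ α)) =
              πα α * (M * μ ^ (-1 : ℝ)) * α ^ n * P * μ ^ ((n : ℝ) * α * φ) *
                exp (-(μ ^ α * S)) := by
            rw [sub_eq_add_neg, rpow_add hμ]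
            ring_nf
          rw [e]
          have := hM' μ hμ
          have := rpow_pos_of_pos hμ ((n : ℝ) * α * φ)
          gcongr
      _ = ENNReal.ofReal (πα α * α ^ n * P * M) *
          ENNReal.ofReal (S ^ (-(n * φ)) * (1 / α) * Gamma (n * φ)) := by
          rw [lintegral_const_mul' _ _ ENNReal.ofReal_ne_top, lintegral_rpow_mul_exp hα hq hSpos]
          have e : ((n : ℝ) * α * φ - 1 + 1) / α = n * φ := by
            field_simp
            ring
          rw [neg_div, e]
      _ ≤ _ := by
          rw [← ENNReal.ofReal_mul hc, ← ENNReal.ofReal_add (by positivity) (by positivity),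
            ← ENNReal.ofReal_mul hKpos.le]
          refine ENNReal.ofReal_le_ofReal ?_
          have h1 := prod_mul_rpow_le x hx k (α := α) hφ
          have h2 := hC' α hα
          rw [← hPdef, ← hS, ← hb] at h1
          have e1 : α ^ (q₀ + n - 1) = α ^ q₀ * (α ^ n * (1 / α)) := by
            rw [add_sub_assoc, rpow_add hα, rpow_sub hα, rpow_natCast, rpow_one]
            ring
          have e2 : α ^ (q₀ + p + n - 1) = α ^ (q₀ + p) * (α ^ n * (1 / α)) := by
            rw [add_sub_assoc, rpow_add hα, rpow_sub hα, rpow_natCast, rpow_one]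
            ring
          rw [e1, e2, rpow_one]
          calc _ = πα α * (P * S ^ (-(n * φ))) * (α ^ n * (1 / α) * M * Gamma (n * φ)) := by ring
            _ ≤ (C * (α ^ q₀ + α ^ (q₀ + p))) * ((∏ i, x i)⁻¹ * exp (-b * α)) *
                (α ^ n * (1 / α) * M * Gamma (n * φ)) := by
                gcongr
            _ = _ := by
                rw [hK]
                ring
  refine (setLIntegral_mono' measurableSet_Ioi inner).trans_lt ?_
  rw [lintegral_const_mul' _ _ ENNReal.ofReal_ne_top, lintegral_add_left (by fun_prop),
    lintegral_rpow_mul_exp one_pos (by linarith) hbpos,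
    lintegral_rpow_mul_exp one_pos (by linarith) hbpos]
  exact ENNReal.mul_lt_top ENNReal.ofReal_lt_top
    (ENNReal.add_lt_top.2 ⟨ENNReal.ofReal_lt_top, ENNReal.ofReal_lt_top⟩)
end

section
/- Let π_μ, π_α, π_φ : (0,∞) → (0,∞) be continuous with π_μ(μ) ≲ μ^k on (0,∞), π_α(α) ≲ α^{q₀} as α → 0⁺, π_α(α) ≲ α^{q_∞} as α → ∞, π_φ(φ) ≲ φ^{r₀} as φ → 0⁺, and π_φ(φ) ≲ φ^{r_∞} as φ → ∞. If k = −1, q_∞ < r₀, 2r_∞ + 1 < q₀, n > −q₀, and n > −r₀, then ∫_{(0,∞)³} π_φ(φ) π_α(α) π_μ(μ) · L(φ,μ,α) dφ dμ dα < ∞; i.e., the posterior in the Stacy model with all three parameters unknown is proper. -/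
open MeasureTheory Real Filter Topology

/-- The Stacy (generalized gamma) likelihood for data `x : Fin n → ℝ` at
parameters `(φ, μ, α)`. -/
noncomputable def stacyLikelihood (n : ℕ) (x : Fin n → ℝ) (φ μ α : ℝ) : ℝ :=
  α ^ n / Real.Gamma φ ^ n * (∏ i, x i ^ (α * φ - 1)) * μ ^ ((n : ℝ) * α * φ) *
    Real.exp (-(μ ^ α * ∑ i, x i ^ α))


/-!
Since `π_μ(μ) ≲ μ⁻¹`, the `μ`-integral is a Gamma integral (`lintegral_scale_eq`). With
`S(α) = ∑ xᵢ^α` it leaves, up to a constant, the kernel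
`π_φ(φ) π_α(α) α^(n-1) · Γ(nφ) / Γ(φ)^n · ∏ xᵢ^(αφ-1) · S(α)^(-nφ)`
to be integrated over `(α, φ) ∈ (0,∞)²`. Two estimates control it.

* Gamma factor (`exists_gamma_ratio_le`): `n^(-nφ) Γ(nφ) / Γ(φ)^n` is at most a constant times
  `φ^(n-1)` for `φ ≤ 1`, by `Γ(t) = Γ(t+1)/t`, and times `φ^((n-1)/2)` for `φ ≥ 1`, by Stirling's
  formula up to a multiplicative constant (`exists_abs_stirlingErr_le`).
* Data factor (`exists_data_le`): `∏ xᵢ^(αφ-1) · S(α)^(-nφ)` is at most a constant times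
  `n^(-nφ) exp(-c φ min(α², α))`. As the data are not all equal, the mean of the
  `exp(α (log xᵢ - mean log x))` exceeds `1` by order `α²` for small `α`, and Jensen's inequality
  turns the gain at `α = 1` into exponential growth for `α ≥ 1`.

Bounding `exp(-u) ≤ C u^(-s)` with a suitable `s` in each of the four regions cut out by `α = 1` and
`φ = 1` (`exists_kernel_le`) majorises the kernel by a product `w(α) w'(φ)`, where each factor is one
power on `(0,1]` and another on `(1,∞)`, both integrable. Admissible `s` exist exactly because
`2 r_∞ + 1 < q₀` and `q_∞ < r₀`, together with `n > -q₀` and `n > -r₀`.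
-/

/-! ### Two-sided power bounds -/

/-- The function equal to `t ^ a` on `(0, 1]` and to `t ^ b` on `(1, ∞)`. -/
noncomputable def powGlue (a b t : ℝ) : ℝ := if t ≤ 1 then t ^ a else t ^ b

lemma powGlue_pos (a b : ℝ) {t : ℝ} (ht : 0 < t) : 0 < powGlue a b t := by
  unfold powGlue; split_ifs <;> positivity

lemma measurable_powGlue (a b : ℝ) : Measurable (powGlue a b) := by
  unfold powGlue
  exact Measurable.ite measurableSet_Iic (by fun_prop) (by fun_prop)

lemma lintegral_powGlue_lt_top {a b : ℝ} (ha : -1 < a) (hb : b < -1) :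
    ∫⁻ t in Set.Ioi (0 : ℝ), ENNReal.ofReal (powGlue a b t) < ⊤ := by
  refine Integrable.lintegral_lt_top ?_
  rw [← IntegrableOn, ← Set.Ioc_union_Ioi_eq_Ioi zero_le_one]
  refine IntegrableOn.union ?_ ?_
  · refine (((intervalIntegrable_iff_integrableOn_Ioc_of_le zero_le_one).1
      (intervalIntegral.intervalIntegrable_rpow' ha)).congr_fun ?_ measurableSet_Ioc)
    intro t ht
    simp [powGlue, ht.2]
  · refine (integrableOn_Ioi_rpow_of_lt hb one_pos).congr_fun ?_ measurableSet_Ioi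
    intro t ht
    simp [powGlue, not_le.2 (show (1 : ℝ) < t from ht)]

lemma exists_le_of_limsup_lt_top {l : Filter ℝ} {f : ℝ → ℝ}
    (h : limsup (fun t => ENNReal.ofReal (f t)) l < ⊤) : ∃ C : ℝ, ∀ᶠ t in l, f t ≤ C := by
  obtain ⟨b, hb, hb'⟩ := exists_between h
  refine ⟨b.toReal, (eventually_lt_of_limsup_lt hb).mono fun t ht => ?_⟩
  exact (ENNReal.ofReal_le_iff_le_toReal hb'.ne).1 ht.le

/-- Asymptotic power bounds at `0⁺` and `∞` become one global bound on `(0, ∞)`, by compactness of the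
remaining intervals. -/
lemma exists_le_powGlue {f : ℝ → ℝ} {a b : ℝ} (hc : ContinuousOn f (Set.Ioi 0))
    (h0 : limsup (fun t => ENNReal.ofReal (f t / t ^ a)) (𝓝[>] (0 : ℝ)) < ⊤)
    (hinf : limsup (fun t => ENNReal.ofReal (f t / t ^ b)) atTop < ⊤) :
    ∃ C > 0, ∀ t > 0, f t ≤ C * powGlue a b t := by
  obtain ⟨C₀, h0⟩ := exists_le_of_limsup_lt_top h0
  obtain ⟨C₁, h1⟩ := exists_le_of_limsup_lt_top hinf
  obtain ⟨ε, hε, h0⟩ := mem_nhdsGT_iff_exists_Ioo_subset.1 h0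
  obtain ⟨T, h1⟩ := eventually_atTop.1 h1
  have hε' : (0 : ℝ) < ε := hε
  have hcont (r : ℝ) : ContinuousOn (fun t => f t / t ^ r) (Set.Ioi 0) := by
    refine hc.div (fun t ht => ?_) fun t ht => (rpow_pos_of_pos ht r).ne'
    exact (continuousAt_rpow_const t r (Or.inl (ne_of_gt ht))).continuousWithinAt
  obtain ⟨C₂, h2⟩ := (isCompact_Icc (a := ε) (b := 1)).bddAbove_image
    ((hcont a).mono fun t ht => lt_of_lt_of_le hε' ht.1)
  obtain ⟨C₃, h3⟩ := (isCompact_Icc (a := 1) (b := T)).bddAbove_image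
    ((hcont b).mono fun t ht => lt_of_lt_of_le one_pos ht.1)
  refine ⟨max 1 (max (max C₀ C₁) (max C₂ C₃)), lt_of_lt_of_le one_pos (le_max_left _ _),
    fun t ht => ?_⟩
  unfold powGlue
  split_ifs with h
  · rw [← div_le_iff₀ (by positivity)]
    rcases lt_or_ge t ε with h' | h'
    · exact (h0 ⟨ht, h'⟩ : f t / t ^ a ≤ C₀).trans (by simp)
    · exact (h2 ⟨t, ⟨h', h⟩, rfl⟩ : f t / t ^ a ≤ C₂).trans (by simp)
  · rw [← div_le_iff₀ (by positivity)]
    rcases le_or_gt T t with h' | h'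
    · exact (h1 t h').trans (by simp)
    · exact (h3 ⟨t, ⟨(not_le.1 h).le, h'.le⟩, rfl⟩ : f t / t ^ b ≤ C₃).trans (by simp)

lemma exists_exp_neg_le_rpow {s : ℝ} (hs : 0 ≤ s) : ∃ C > 0, ∀ u > 0, exp (-u) ≤ C * u ^ (-s) := by
  obtain ⟨m, hm⟩ := exists_nat_ge s
  refine ⟨1 + m.factorial, by positivity, fun u hu => ?_⟩
  rcases le_or_gt u 1 with h | h
  · have h1 : 1 ≤ u ^ (-s) := one_le_rpow_of_pos_of_le_one_of_nonpos hu h (by linarith)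
    have h2 : exp (-u) ≤ 1 := by simpa using hu.le
    have h3 : (0 : ℝ) < m.factorial := by positivity
    nlinarith
  · have h1 : u ^ m / m.factorial ≤ exp u := pow_div_factorial_le_exp u hu.le m
    have h2 : u ^ s ≤ u ^ m := by
      rw [← rpow_natCast]; exact rpow_le_rpow_of_exponent_le h.le hm
    rw [exp_neg, rpow_neg hu.le, ← div_eq_mul_inv, inv_le_iff_one_le_mul₀ (exp_pos _)]
    have h3 : (0 : ℝ) < m.factorial := by positivity
    rw [div_mul_eq_mul_div, one_le_div (by positivity)]
    rw [div_le_iff₀ h3] at h1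
    nlinarith [exp_pos u]

/-! ### Stirling bounds and the Gamma ratio -/

/-- The logarithm of `Γ(t) / (t ^ (t - 1/2) * exp (-t))`, that is, the error of Stirling's formula for
`log Γ(t)` up to the additive constant `log √(2π)`. -/
noncomputable def stirlingErr (t : ℝ) : ℝ := log (Gamma t) - (t - 1 / 2) * log t + t

lemma stirlingErr_sub {t : ℝ} (ht : 0 < t) :
    stirlingErr t - stirlingErr (t + 1) = (t + 1 / 2) * log (1 + t⁻¹) - 1 := by
  unfold stirlingErr
  have h1 : log (1 + t⁻¹) = log (t + 1) - log t := by
    rw [← log_div (by positivity) ht.ne']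
    congr 1; field_simp
  rw [Gamma_add_one ht.ne', log_mul ht.ne' (Gamma_pos_of_pos ht).ne', h1]
  ring

/-- `stirlingErr` decreases under `t ↦ t + 1`, whereas `stirlingErr t - 1 / (12 t)` increases. Both follow
from `(t + 1/2) log (1 + 1/t) - 1 = ∑_{k ≥ 1} y ^ k / (2k + 1)`, where `y = (2t + 1)⁻²`. -/
lemma stirlingErr_sub_mem {t : ℝ} (ht : 0 < t) :
    0 ≤ stirlingErr t - stirlingErr (t + 1) ∧
      stirlingErr t - stirlingErr (t + 1) ≤ 1 / (12 * t) - 1 / (12 * (t + 1)) := by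
  rw [stirlingErr_sub ht]
  have hs := (hasSum_log_one_add_inv ht).mul_left (t + 1 / 2)
  set y : ℝ := (1 / (2 * t + 1)) ^ 2 with hy
  have hy0 : 0 ≤ y := by positivity
  have hy1 : y < 1 := by
    rw [hy, one_div, inv_pow]
    exact inv_lt_one_of_one_lt₀ (by nlinarith)
  have hterm : ∀ k : ℕ, (t + 1 / 2) * ((2 : ℝ) * (1 / (2 * k + 1)) *
      (1 / (2 * t + 1)) ^ (2 * k + 1)) = 1 / (2 * k + 1) * y ^ k := by
    intro k
    rw [pow_succ, pow_mul, ← hy]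
    field_simp
  simp only [hterm] at hs
  have hs1 := (hasSum_nat_add_iff' 1).2 hs
  simp only [Finset.sum_range_one, Nat.cast_zero, mul_zero, zero_add, pow_zero, div_one,
    mul_one] at hs1
  refine ⟨hs1.nonneg fun k => by positivity, ?_⟩
  have hg := ((hasSum_geometric_of_lt_one hy0 hy1).mul_left (1 / 3 * y))
  have := hasSum_le (fun k => ?_) hs1 hg
  · refine this.trans (le_of_eq ?_)
    have h : 1 - y = 4 * t * (t + 1) * y := by rw [hy]; field_simp; ring
    have hy0' : 0 < y := by positivity
    rw [h]
    field_simp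
    ring
  · rw [pow_succ, mul_comm (y ^ k) y, ← mul_assoc]
    gcongr
    push_cast
    linarith [(Nat.cast_nonneg k : (0 : ℝ) ≤ k)]

/-- Stirling's formula up to a multiplicative constant: telescoping `stirlingErr_sub_mem` carries a bound
on the compact interval `[1, 2]` to `[1, ∞)`. -/
lemma exists_abs_stirlingErr_le : ∃ B, ∀ t ≥ 1, |stirlingErr t| ≤ B := by
  have hcont : ContinuousOn stirlingErr (Set.Icc 1 2) := by
    intro t ht
    have ht0 : 0 < t := lt_of_lt_of_le one_pos ht.1
    have h1 : ContinuousAt Gamma t := (differentiableAt_Gamma fun m => by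
      have : (0 : ℝ) ≤ m := by positivity
      linarith).continuousAt
    have := (Gamma_pos_of_pos ht0).ne'
    have := ht0.ne'
    unfold stirlingErr
    exact ContinuousAt.continuousWithinAt (by fun_prop (disch := assumption))
  obtain ⟨C, hC⟩ := isCompact_Icc.exists_bound_of_continuousOn hcont
  have key : ∀ N : ℕ, ∀ t ∈ Set.Icc (1 : ℝ) 2, stirlingErr (t + N) ≤ stirlingErr t ∧
      stirlingErr t - 1 / (12 * t) ≤ stirlingErr (t + N) - 1 / (12 * (t + N)) := by
    intro N t ht
    induction N with
    | zero => simp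
    | succ N ih =>
      have ht0 : 0 < t + N := by have := ht.1; positivity
      have h := stirlingErr_sub_mem ht0
      push_cast
      rw [← add_assoc]
      constructor <;> linarith [ih.1, ih.2, h.1, h.2]
  refine ⟨C + 1, fun t ht => ?_⟩
  -- translate `t` into the fundamental interval `[1, 2]`
  obtain ⟨N, hN⟩ : ∃ N : ℕ, t - N ∈ Set.Icc (1 : ℝ) 2 := by
    refine ⟨⌊t - 1⌋₊, ?_, ?_⟩
    · linarith [Nat.floor_le (show 0 ≤ t - 1 by linarith)]
    · linarith [Nat.lt_floor_add_one (t - 1)]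
  have h := key N _ hN
  have hb := abs_le.1 (hC _ hN)
  rw [sub_add_cancel] at h
  have h1 : 1 / (12 * (t - N)) ≤ 1 := by
    rw [div_le_one (by linarith [hN.1])]; linarith [hN.1]
  have h2 : 0 < 1 / (12 * t) := by positivity
  rw [abs_le]
  constructor <;> linarith [h.1, h.2, hb.1, hb.2]

/-- The growth of `Γ(nt) / Γ(t)^n` at `0` and at `∞`, once the exponential factor `n^(nt)` is removed. -/
lemma exists_gamma_ratio_le {n : ℕ} (hn : 1 ≤ n) : ∃ C > 0, ∀ t > 0,
    Gamma (n * t) / Gamma t ^ n * (n : ℝ) ^ (-(n * t)) ≤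
      C * powGlue ((n : ℝ) - 1) (((n : ℝ) - 1) / 2) t := by
  have hn0 : (0 : ℝ) < n := by positivity
  have hn1 : (1 : ℝ) ≤ n := by exact_mod_cast hn
  obtain ⟨B, hB⟩ := exists_abs_stirlingErr_le
  -- the ratio divided by `t ^ (n - 1)`, written so that it is visibly continuous at `0`
  have hcont : ContinuousOn (fun t : ℝ => Gamma (n * t + 1) / (n * Gamma (t + 1) ^ n) *
      (n : ℝ) ^ (-(n * t))) (Set.Icc 0 1) := by
    intro t ht
    have hG : ∀ s > 0, ContinuousAt Gamma s := fun s hs => (differentiableAt_Gamma fun m => by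
      have : (0 : ℝ) ≤ m := by positivity
      linarith).continuousAt
    have ht0 := ht.1
    have h1 : ContinuousAt (fun t : ℝ => Gamma (n * t + 1)) t :=
      ContinuousAt.comp (f := fun t : ℝ => n * t + 1) (hG _ (by positivity)) (by fun_prop)
    have h2 : ContinuousAt (fun t : ℝ => Gamma (t + 1)) t :=
      ContinuousAt.comp (f := fun t : ℝ => t + 1) (hG _ (by positivity)) (by fun_prop)
    have h3 : (n * Gamma (t + 1) ^ n) ≠ 0 := by
      have := Gamma_pos_of_pos (show 0 < t + 1 by linarith)
      positivity
    have h4 : ContinuousAt (fun t : ℝ => (n : ℝ) ^ (-(n * t))) t :=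
      ContinuousAt.rpow continuousAt_const (by fun_prop) (Or.inl hn0.ne')
    exact ((h1.div (by fun_prop) h3).mul h4).continuousWithinAt
  obtain ⟨C, hC⟩ := isCompact_Icc.bddAbove_image hcont
  refine ⟨max (exp ((n + 1) * B)) C, lt_of_lt_of_le (exp_pos _) (le_max_left _ _), fun t ht => ?_⟩
  have hG := Gamma_pos_of_pos ht
  have hnG := Gamma_pos_of_pos (mul_pos hn0 ht)
  unfold powGlue
  split_ifs with h
  · refine le_trans (le_of_eq ?_) (mul_le_mul_of_nonneg_right
      ((hC ⟨t, ⟨ht.le, h⟩, rfl⟩).trans (le_max_right _ _)) (by positivity))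
    simp only
    rw [Gamma_add_one (by positivity), Gamma_add_one ht.ne', rpow_sub ht, rpow_natCast, rpow_one,
      mul_pow]
    field_simp
  · have ht1 : 1 ≤ t := (not_le.1 h).le
    refine le_trans ?_ (mul_le_mul_of_nonneg_right (le_max_left _ _) (by positivity))
    rw [← log_le_log_iff (by positivity) (by positivity), log_mul (by positivity) (by positivity),
      log_mul (by positivity) (by positivity), log_div (by positivity) (by positivity), log_pow,
      log_exp, log_rpow hn0, log_rpow ht]
    have h1 := abs_le.1 (hB (n * t) (by nlinarith))
    have h2 := abs_le.1 (hB t ht1)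
    unfold stirlingErr at h1 h2
    rw [log_mul hn0.ne' ht.ne'] at h1
    have h3 : 0 ≤ log (n : ℝ) := log_nonneg hn1
    nlinarith [h1.2, mul_le_mul_of_nonneg_left h2.1 hn0.le]

/-! ### The data factor -/

/-- A quantitative strict AM-GM inequality: `∑ xᵢ^t` exceeds `n` times the geometric mean of the `xᵢ^t`
by a factor at least `exp (c * min (t², t))`. -/
lemma exists_exp_le_sum_rpow {n : ℕ} {x : Fin n → ℝ} (hx : ∀ i, 0 < x i)
    (hxne : ∃ i j, x i ≠ x j) : ∃ c > 0, ∀ t > 0,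
      n * exp (t * ((∑ i, log (x i)) / n) + c * powGlue 2 1 t) ≤ ∑ i, x i ^ t := by
  obtain ⟨i₁, i₂, hne⟩ := hxne
  have hn0 : (0 : ℝ) < n := by
    have := i₁.pos
    positivity
  set m := (∑ i, log (x i)) / n with hm
  set d : Fin n → ℝ := fun i => log (x i) - m with hd
  have hsum : ∑ i, d i = 0 := by
    simp [hd, Finset.sum_sub_distrib, hm, mul_div_cancel₀ _ hn0.ne']
  obtain ⟨i₀, hi₀⟩ : ∃ i, 0 < d i := by
    by_contra! h
    have h0 := (Finset.sum_eq_zero_iff_of_nonpos fun i _ => h i).1 hsum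
    have h1 := h0 i₁ (Finset.mem_univ _)
    have h2 := h0 i₂ (Finset.mem_univ _)
    exact hne (log_injOn_pos (hx i₁) (hx i₂) (by simp only [hd] at h1 h2; linarith))
  set D := d i₀ ^ 2 / (2 * n) with hD
  have hD0 : 0 < D := by positivity
  -- second order in the coordinate `i₀`, first order elsewhere; the linear terms cancel
  have hquad : ∀ t ≥ 0, 1 + D * t ^ 2 ≤ ∑ i, (1 / n : ℝ) * exp (t * d i) := by
    intro t ht
    have h1 : ∑ i, (1 + t * d i + if i = i₀ then (t * d i₀) ^ 2 / 2 else 0) ≤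
        ∑ i, exp (t * d i) := by
      refine Finset.sum_le_sum fun i _ => ?_
      split_ifs with h
      · rw [h]; exact quadratic_le_exp_of_nonneg (by positivity)
      · linarith [add_one_le_exp (t * d i)]
    rw [Finset.sum_add_distrib, Finset.sum_add_distrib, ← Finset.mul_sum, hsum] at h1
    simp only [Finset.sum_const, Finset.card_univ, Fintype.card_fin, nsmul_eq_mul, mul_one,
      mul_zero, add_zero, Finset.sum_ite_eq', Finset.mem_univ, if_true] at h1
    rw [← Finset.mul_sum, one_div_mul_eq_div, le_div_iff₀ hn0]
    refine le_trans (le_of_eq ?_) h1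
    rw [hD]; field_simp
  have hlog : ∀ u ≥ 0, u / (1 + u) ≤ log (1 + u) := by
    intro u hu
    have := one_sub_inv_le_log_of_pos (show 0 < 1 + u by linarith)
    refine le_trans (le_of_eq ?_) this
    field_simp; ring
  have hmain : ∀ t > 0, exp (D / (1 + D) * powGlue 2 1 t) ≤
      ∑ i, (1 / n : ℝ) * exp (t * d i) := by
    intro t ht
    unfold powGlue
    split_ifs with h
    · refine le_trans ?_ (hquad t ht.le)
      rw [← le_log_iff_exp_le (by positivity)]
      refine le_trans ?_ (hlog _ (by positivity))
      rw [rpow_two, div_mul_eq_mul_div]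
      have : t ^ 2 ≤ 1 := by nlinarith
      gcongr
      nlinarith
    · have h1 := rpow_arith_mean_le_arith_mean_rpow Finset.univ (fun _ => (1 / n : ℝ))
        (fun i => exp (d i)) (fun _ _ => by positivity) (by simp [hn0.ne'])
        (fun _ _ => (exp_pos _).le) (not_le.1 h).le
      simp only [← exp_mul] at h1
      simp only [mul_comm t]
      refine le_trans ?_ h1
      rw [rpow_one, exp_mul]
      refine rpow_le_rpow (exp_pos _).le ?_ ht.le
      have h2 := hquad 1 zero_le_one
      simp only [one_pow, mul_one, one_mul] at h2
      refine le_trans ?_ h2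
      rw [← le_log_iff_exp_le (by positivity)]
      exact hlog D hD0.le
  refine ⟨D / (1 + D), by positivity, fun t ht => ?_⟩
  have h := mul_le_mul_of_nonneg_left (hmain t ht) (show 0 ≤ n * exp (t * m) by positivity)
  rw [exp_add, ← mul_assoc]
  refine h.trans (le_of_eq ?_)
  rw [Finset.mul_sum]
  refine Finset.sum_congr rfl fun i _ => ?_
  rw [rpow_def_of_pos (hx i), mul_comm (log (x i)), show t * log (x i) = t * m + t * d i by
    simp only [hd]; ring, exp_add]
  field_simp

/-- The data-dependent factor left after integrating out `μ` decays like `exp (-c φ min (α², α))`, apart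
from `n^(-nφ)`, which the Gamma ratio absorbs. -/
lemma exists_data_le {n : ℕ} {x : Fin n → ℝ} (hx : ∀ i, 0 < x i)
    (hxne : ∃ i j, x i ≠ x j) : ∃ c > 0, ∃ K > 0, ∀ α > (0 : ℝ), ∀ φ > (0 : ℝ),
      (∏ i, x i ^ (α * φ - 1)) * (∑ i, x i ^ α) ^ (-(n * φ)) ≤
        K * (n : ℝ) ^ (-(n * φ)) * exp (-(c * powGlue 2 1 α * φ)) := by
  obtain ⟨c, hc, h⟩ := exists_exp_le_sum_rpow hx hxne
  have hn0 : (0 : ℝ) < n := by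
    have := hxne.choose.pos
    positivity
  refine ⟨n * c, by positivity, exp (-∑ i, log (x i)), exp_pos _, fun α hα φ hφ => ?_⟩
  have h1 := rpow_le_rpow_of_nonpos (by positivity) (h α hα)
    (show -(n * φ) ≤ 0 by have := mul_pos hn0 hφ; linarith)
  rw [mul_rpow hn0.le (exp_pos _).le, ← exp_mul] at h1
  have h2 : ∏ i, x i ^ (α * φ - 1) = exp ((α * φ - 1) * ∑ i, log (x i)) := by
    rw [Finset.mul_sum, exp_sum]
    exact Finset.prod_congr rfl fun i _ => by rw [rpow_def_of_pos (hx i), mul_comm]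
  rw [h2]
  refine (mul_le_mul_of_nonneg_left h1 (exp_pos _).le).trans (le_of_eq ?_)
  rw [mul_left_comm, ← exp_add, mul_right_comm, ← exp_add, mul_comm]
  congr 2
  field_simp
  ring

/-! ### The integral over the scale parameter -/

/-- The integral over `μ` against the scale-invariant density `μ⁻¹` is a Gamma integral. -/
lemma lintegral_scale_eq {n : ℕ} (hn : 1 ≤ n) {x : Fin n → ℝ} (hx : ∀ i, 0 < x i) {C α φ : ℝ}
    (hC : 0 ≤ C) (hα : 0 < α) (hφ : 0 < φ) :
    ∫⁻ μ in Set.Ioi (0 : ℝ), ENNReal.ofReal (C * μ ^ (-1 : ℝ) * stacyLikelihood n x φ μ α) =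
      ENNReal.ofReal (C * α ^ ((n : ℝ) - 1) * (Gamma (n * φ) / Gamma φ ^ n) *
        ((∏ i, x i ^ (α * φ - 1)) * (∑ i, x i ^ α) ^ (-(n * φ)))) := by
  have hn0 : (0 : ℝ) < n := by positivity
  have hS : 0 < ∑ i, x i ^ α :=
    Finset.sum_pos (fun i _ => rpow_pos_of_pos (hx i) _) ⟨⟨0, hn⟩, Finset.mem_univ _⟩
  have hP : 0 < ∏ i, x i ^ (α * φ - 1) := Finset.prod_pos fun i _ => rpow_pos_of_pos (hx i) _
  have hG := Gamma_pos_of_pos hφ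
  have hnG := Gamma_pos_of_pos (mul_pos hn0 hφ)
  have hnαφ : 0 < n * α * φ := by positivity
  have hI := integral_rpow_mul_exp_neg_mul_rpow hα (q := n * α * φ - 1) (by linarith) hS
  rw [show -(n * α * φ - 1 + 1) / α = -(n * φ) by field_simp; ring,
    show (n * α * φ - 1 + 1) / α = n * φ by field_simp; ring] at hI
  set B := C * (α ^ n / Gamma φ ^ n * ∏ i, x i ^ (α * φ - 1)) with hB
  have hB0 : 0 ≤ B := by positivity
  have hint : Integrable (fun μ : ℝ => μ ^ (n * α * φ - 1) * exp (-(∑ i, x i ^ α) * μ ^ α))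
      (volume.restrict (Set.Ioi 0)) := by
    -- the Bochner integral of a non-integrable function is `0`, and this one is positive
    apply Integrable.of_integral_ne_zero
    rw [hI]
    positivity
  calc _ = ∫⁻ μ in Set.Ioi (0 : ℝ), ENNReal.ofReal
        (B * (μ ^ (n * α * φ - 1) * exp (-(∑ i, x i ^ α) * μ ^ α))) := by
        refine setLIntegral_congr_fun measurableSet_Ioi fun μ hμ => ?_
        have hμ0 : (0 : ℝ) < μ := hμ
        simp only [stacyLikelihood, hB]
        rw [rpow_sub hμ0, rpow_one, rpow_neg_one,
          show -(∑ i, x i ^ α) * μ ^ α = -(μ ^ α * ∑ i, x i ^ α) by ring]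
        congr 1
        field_simp
    _ = ENNReal.ofReal (∫ μ in Set.Ioi (0 : ℝ),
        B * (μ ^ (n * α * φ - 1) * exp (-(∑ i, x i ^ α) * μ ^ α))) := by
        refine (ofReal_integral_eq_lintegral_ofReal (hint.const_mul B) ?_).symm
        filter_upwards [ae_restrict_mem measurableSet_Ioi] with μ hμ
        have hμ0 : (0 : ℝ) < μ := hμ
        simp only [Pi.zero_apply]
        positivity
    _ = _ := by
        rw [integral_const_mul, hI, hB, rpow_sub hα, rpow_natCast, rpow_one]
        congr 1
        field_simp

/-! ### The remaining double integral -/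

/-- The kernel in `(α, φ)` is dominated by a product of two functions, each integrable over `(0, ∞)`. -/
lemma exists_kernel_le {c N q₀ qinf r₀ rinf : ℝ} (hc : 0 < c) (hqr : qinf < r₀)
    (hrq : 2 * rinf + 1 < q₀) (hnq : -q₀ < N) (hnr : -r₀ < N) :
    ∃ a > -1, ∃ b < -1, ∃ a' > -1, ∃ b' < -1, ∃ K > 0, ∀ α > 0, ∀ φ > 0,
      powGlue q₀ qinf α * α ^ (N - 1) * (powGlue r₀ rinf φ * powGlue (N - 1) ((N - 1) / 2) φ) *
        exp (-(c * powGlue 2 1 α * φ)) ≤ K * (powGlue a b α * powGlue a' b' φ) := by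
  -- decay exponents: `s` for `α ≤ 1 < φ`, `p` for `φ ≤ 1 < α`, `s + p` when both exceed `1`, and `0`
  -- when neither does
  obtain ⟨s, hs, hs'⟩ := exists_between (show max 0 (rinf + (N + 1) / 2) < (q₀ + N) / 2 by
    rw [max_lt_iff]; constructor <;> linarith)
  obtain ⟨p, hp, hp'⟩ := exists_between (show max 0 (qinf + N) < r₀ + N by
    rw [max_lt_iff]; constructor <;> linarith)
  rw [max_lt_iff] at hs hp
  obtain ⟨C₁, hC₁, h₁⟩ := exists_exp_neg_le_rpow hs.1.le
  obtain ⟨C₂, hC₂, h₂⟩ := exists_exp_neg_le_rpow hp.1.le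
  obtain ⟨C₃, hC₃, h₃⟩ := exists_exp_neg_le_rpow (s := s + p) (by linarith)
  refine ⟨q₀ + N - 1 - 2 * s, by linarith, qinf + N - 1 - p, by linarith,
    r₀ + N - 1 - p, by linarith, rinf + (N - 1) / 2 - s, by linarith,
    1 + C₁ * c ^ (-s) + C₂ * c ^ (-p) + C₃ * c ^ (-(s + p)), by positivity,
    fun α hα φ hφ => ?_⟩
  have hk₁ : 0 < C₁ * c ^ (-s) := by positivity
  have hk₂ : 0 < C₂ * c ^ (-p) := by positivity
  have hk₃ : 0 < C₃ * c ^ (-(s + p)) := by positivity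
  have h₁ := h₁ (c * powGlue 2 1 α * φ) (by have := powGlue_pos 2 1 hα; positivity)
  have h₂ := h₂ (c * powGlue 2 1 α * φ) (by have := powGlue_pos 2 1 hα; positivity)
  have h₃ := h₃ (c * powGlue 2 1 α * φ) (by have := powGlue_pos 2 1 hα; positivity)
  -- any one decay bound multiplies out to a product of powers
  have gen : ∀ {C σ e x y z : ℝ}, exp (-(c * powGlue 2 1 α * φ)) ≤ C * (c * α ^ e * φ) ^ (-σ) →
      α ^ x * α ^ (N - 1) * (φ ^ y * φ ^ z) * exp (-(c * powGlue 2 1 α * φ)) ≤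
        C * c ^ (-σ) * (α ^ (x + N - 1 - e * σ) * φ ^ (y + z - σ)) := by
    intro C σ e x y z h
    refine (mul_le_mul_of_nonneg_left h (by positivity)).trans (le_of_eq ?_)
    rw [mul_rpow (by positivity) hφ.le, mul_rpow hc.le (by positivity), ← rpow_mul hα.le,
      show x + N - 1 - e * σ = x + (N - 1) + e * -σ by ring, rpow_add hα, rpow_add hα,
      sub_eq_add_neg (y + z), rpow_add hφ, rpow_add hφ]
    ring
  have h₀ : exp (-(c * powGlue 2 1 α * φ)) ≤ 1 * (c * α ^ (2 : ℝ) * φ) ^ (-0 : ℝ) := by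
    have := powGlue_pos 2 1 hα
    simpa using by positivity
  rcases le_or_gt α 1 with hα1 | hα1 <;> rcases le_or_gt φ 1 with hφ1 | hφ1
  · refine le_trans ?_ (mul_le_mul_of_nonneg_right (show 1 * c ^ (-0 : ℝ) ≤ _ by
      rw [neg_zero, rpow_zero]; linarith) (mul_pos (powGlue_pos _ _ hα) (powGlue_pos _ _ hφ)).le)
    simp only [powGlue, if_pos hα1, if_pos hφ1] at h₀ gen ⊢
    refine (gen h₀).trans (mul_le_mul_of_nonneg_left ?_ (by positivity))
    exact mul_le_mul (rpow_le_rpow_of_exponent_ge hα hα1 (by linarith))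
      (rpow_le_rpow_of_exponent_ge hφ hφ1 (by linarith)) (by positivity) (by positivity)
  · refine le_trans ?_ (mul_le_mul_of_nonneg_right (show C₁ * c ^ (-s) ≤ _ by linarith)
      (mul_pos (powGlue_pos _ _ hα) (powGlue_pos _ _ hφ)).le)
    simp only [powGlue, if_pos hα1, if_neg (not_le.2 hφ1)] at h₁ gen ⊢
    exact gen h₁
  · refine le_trans ?_ (mul_le_mul_of_nonneg_right (show C₂ * c ^ (-p) ≤ _ by linarith)
      (mul_pos (powGlue_pos _ _ hα) (powGlue_pos _ _ hφ)).le)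
    simp only [powGlue, if_neg (not_le.2 hα1), if_pos hφ1] at h₂ gen ⊢
    refine (gen h₂).trans (le_of_eq ?_)
    ring_nf
  · refine le_trans ?_ (mul_le_mul_of_nonneg_right (show C₃ * c ^ (-(s + p)) ≤ _ by linarith)
      (mul_pos (powGlue_pos _ _ hα) (powGlue_pos _ _ hφ)).le)
    simp only [powGlue, if_neg (not_le.2 hα1), if_neg (not_le.2 hφ1)] at h₃ gen ⊢
    refine (gen h₃).trans (mul_le_mul_of_nonneg_left ?_ (by positivity))
    exact mul_le_mul (rpow_le_rpow_of_exponent_le hα1.le (by linarith))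
      (rpow_le_rpow_of_exponent_le hφ1.le (by linarith)) (by positivity) (by positivity)

lemma aemeasurable_stacy_majorant {n : ℕ} {x : Fin n → ℝ} {r₀ rinf K α : ℝ} :
    AEMeasurable (Function.uncurry fun μ φ : ℝ =>
      ENNReal.ofReal (K * powGlue r₀ rinf φ * μ ^ (-1 : ℝ) * stacyLikelihood n x φ μ α))
      ((volume.restrict (Set.Ioi 0)).prod (volume.restrict (Set.Ioi 0))) := by
  have hG : AEMeasurable Gamma (volume.restrict (Set.Ioi (0 : ℝ))) := by
    refine ContinuousOn.aemeasurable (fun t ht => ?_) measurableSet_Ioi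
    refine (differentiableAt_Gamma fun m => ?_).continuousAt.continuousWithinAt
    have h0 : (0 : ℝ) < t := ht
    have : (0 : ℝ) ≤ m := by positivity
    linarith
  have hG' : AEMeasurable (fun p : ℝ × ℝ => Gamma p.2)
      ((volume.restrict (Set.Ioi (0 : ℝ))).prod (volume.restrict (Set.Ioi (0 : ℝ)))) :=
    hG.comp_snd
  have hP := measurable_powGlue r₀ rinf
  unfold stacyLikelihood Function.uncurry
  fun_prop

/-- (Theorem 2.7 of the paper.) In the Stacy model with all three
parameters unknown, if `π_μ(μ) ≲ μ^k` on `(0,∞)`, `π_α(α) ≲ α^{q₀}` as `α → 0⁺`,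
`π_α(α) ≲ α^{q_∞}` as `α → ∞`, `π_φ(φ) ≲ φ^{r₀}` as `φ → 0⁺`, `π_φ(φ) ≲ φ^{r_∞}` as
`φ → ∞`, and `k = -1`, `q_∞ < r₀`, `2r_∞ + 1 < q₀`, `n > -q₀`, `n > -r₀`, then the
posterior is proper. -/
theorem stacy_posterior_proper
    (n : ℕ) (hn : 2 ≤ n) (x : Fin n → ℝ) (hx : ∀ i, 0 < x i) (hxne : ∃ i j, x i ≠ x j)
    (πμ πα πφ : ℝ → ℝ)
    (hπμc : ContinuousOn πμ (Set.Ioi 0)) (hπαc : ContinuousOn πα (Set.Ioi 0))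
    (hπφc : ContinuousOn πφ (Set.Ioi 0))
    (hπμ0 : ∀ t > 0, 0 < πμ t) (hπα0 : ∀ t > 0, 0 < πα t) (hπφ0 : ∀ t > 0, 0 < πφ t)
    (k q₀ qinf r₀ rinf : ℝ)
    (hμ : ∃ M > 0, ∀ t > 0, πμ t ≤ M * t ^ k)
    (hα0 : Filter.limsup (fun t => ENNReal.ofReal (πα t / t ^ q₀)) (𝓝[>] (0:ℝ)) < ⊤)
    (hαinf : Filter.limsup (fun t => ENNReal.ofReal (πα t / t ^ qinf)) Filter.atTop < ⊤)
    (hφ0 : Filter.limsup (fun t => ENNReal.ofReal (πφ t / t ^ r₀)) (𝓝[>] (0:ℝ)) < ⊤)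
    (hφinf : Filter.limsup (fun t => ENNReal.ofReal (πφ t / t ^ rinf)) Filter.atTop < ⊤)
    (hk : k = -1) (hqr : qinf < r₀) (hrq : 2 * rinf + 1 < q₀)
    (hnq : -q₀ < (n : ℝ)) (hnr : -r₀ < (n : ℝ)) :
    (∫⁻ α in Set.Ioi (0:ℝ), ∫⁻ μ in Set.Ioi (0:ℝ), ∫⁻ φ in Set.Ioi (0:ℝ),
      ENNReal.ofReal (πφ φ * πα α * πμ μ * stacyLikelihood n x φ μ α)) < ⊤ := by
  subst hk
  obtain ⟨M, hM, hμ⟩ := hμ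
  obtain ⟨A, hA, hα⟩ := exists_le_powGlue hπαc hα0 hαinf
  obtain ⟨P, hP, hφ⟩ := exists_le_powGlue hπφc hφ0 hφinf
  obtain ⟨c, hc, D, hD, hdata⟩ := exists_data_le hx hxne
  obtain ⟨R, hR, hgamma⟩ := exists_gamma_ratio_le (show 1 ≤ n by omega)
  obtain ⟨a, ha, b, hb, a', ha', b', hb', K, hK, hker⟩ :=
    exists_kernel_le hc hqr hrq hnq hnr
  have hn0 : (0 : ℝ) < n := by positivity
  have hinner : ∀ α > 0, ∫⁻ μ in Set.Ioi (0 : ℝ), ∫⁻ φ in Set.Ioi (0 : ℝ),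
      ENNReal.ofReal (πφ φ * πα α * πμ μ * stacyLikelihood n x φ μ α) ≤
      ENNReal.ofReal (P * A * M * D * R * K * powGlue a b α) *
        ∫⁻ φ in Set.Ioi (0 : ℝ), ENNReal.ofReal (powGlue a' b' φ) := by
    intro α hα'
    have hαp := powGlue_pos q₀ qinf hα'
    calc _ ≤ ∫⁻ μ in Set.Ioi (0 : ℝ), ∫⁻ φ in Set.Ioi (0 : ℝ),
          ENNReal.ofReal (P * A * M * powGlue q₀ qinf α * powGlue r₀ rinf φ * μ ^ (-1 : ℝ) *
            stacyLikelihood n x φ μ α) := by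
          refine setLIntegral_mono' measurableSet_Ioi fun μ hμ' =>
            setLIntegral_mono' measurableSet_Ioi fun φ hφ' => ENNReal.ofReal_le_ofReal ?_
          have hμ0 : (0 : ℝ) < μ := hμ'
          have hφ0 : (0 : ℝ) < φ := hφ'
          have hφp := powGlue_pos r₀ rinf hφ0
          have hG := Gamma_pos_of_pos hφ0
          have hL : 0 ≤ stacyLikelihood n x φ μ α := by
            have : 0 ≤ ∏ i, x i ^ (α * φ - 1) :=
              Finset.prod_nonneg fun i _ => (rpow_pos_of_pos (hx i) _).le
            unfold stacyLikelihood
            positivity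
          refine mul_le_mul_of_nonneg_right ?_ hL
          have h1 := mul_le_mul (mul_le_mul (hφ φ hφ0) (hα α hα') (hπα0 α hα').le (by positivity))
            (hμ μ hμ0) (hπμ0 μ hμ0).le (by positivity)
          exact h1.trans (le_of_eq (by ring))
      _ = ∫⁻ φ in Set.Ioi (0 : ℝ), ∫⁻ μ in Set.Ioi (0 : ℝ),
          ENNReal.ofReal (P * A * M * powGlue q₀ qinf α * powGlue r₀ rinf φ * μ ^ (-1 : ℝ) *
            stacyLikelihood n x φ μ α) :=
          lintegral_lintegral_swap aemeasurable_stacy_majorant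
      _ ≤ ∫⁻ φ in Set.Ioi (0 : ℝ), ENNReal.ofReal (P * A * M * D * R * K * powGlue a b α) *
            ENNReal.ofReal (powGlue a' b' φ) := by
          refine setLIntegral_mono' measurableSet_Ioi fun φ hφ' => ?_
          have hφ0 : (0 : ℝ) < φ := hφ'
          have hφp := powGlue_pos r₀ rinf hφ0
          have hG := Gamma_pos_of_pos hφ0
          have hnG := Gamma_pos_of_pos (mul_pos hn0 hφ0)
          have hw := powGlue_pos a b hα'
          rw [lintegral_scale_eq (show 1 ≤ n by omega) hx (by positivity) hα' hφ0,
            ← ENNReal.ofReal_mul (by positivity)]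
          refine ENNReal.ofReal_le_ofReal ?_
          set E := exp (-(c * powGlue 2 1 α * φ)) with hE
          have hE0 : 0 < E := exp_pos _
          calc _ ≤ P * A * M * powGlue q₀ qinf α * powGlue r₀ rinf φ * α ^ ((n : ℝ) - 1) *
                (Gamma (n * φ) / Gamma φ ^ n) * (D * (n : ℝ) ^ (-(n * φ)) * E) := by
                exact mul_le_mul_of_nonneg_left (hdata α hα' φ hφ0) (by positivity)
            _ = P * A * M * D * powGlue q₀ qinf α * powGlue r₀ rinf φ * α ^ ((n : ℝ) - 1) * E *
                (Gamma (n * φ) / Gamma φ ^ n * (n : ℝ) ^ (-(n * φ))) := by ring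
            _ ≤ P * A * M * D * powGlue q₀ qinf α * powGlue r₀ rinf φ * α ^ ((n : ℝ) - 1) * E *
                (R * powGlue ((n : ℝ) - 1) (((n : ℝ) - 1) / 2) φ) := by
                exact mul_le_mul_of_nonneg_left (hgamma φ hφ0) (by positivity)
            _ = P * A * M * D * R * (powGlue q₀ qinf α * α ^ ((n : ℝ) - 1) *
                (powGlue r₀ rinf φ * powGlue ((n : ℝ) - 1) (((n : ℝ) - 1) / 2) φ) * E) := by ring
            _ ≤ P * A * M * D * R * (K * (powGlue a b α * powGlue a' b' φ)) := by
                exact mul_le_mul_of_nonneg_left (hker α hα' φ hφ0) (by positivity)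
            _ = _ := by ring
      _ = _ := lintegral_const_mul' _ _ ENNReal.ofReal_ne_top
  refine (setLIntegral_mono' measurableSet_Ioi hinner).trans_lt ?_
  rw [lintegral_mul_const' _ _ (lintegral_powGlue_lt_top ha' hb').ne]
  refine ENNReal.mul_lt_top ?_ (lintegral_powGlue_lt_top ha' hb')
  simp_rw [ENNReal.ofReal_mul (show 0 ≤ P * A * M * D * R * K by positivity)]
  rw [lintegral_const_mul' _ _ ENNReal.ofReal_ne_top]
  exact ENNReal.mul_lt_top ENNReal.ofReal_lt_top (lintegral_powGlue_lt_top ha hb)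
end
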